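/- arXiv:math/0103141 — 10 statements merged into one kernel-verified Lean document; each statement's English description precedes it below -/
import Mathlib

section
/- Let 𝔤 be a finite-dimensional real Lie algebra with an inner product ⟨·,·⟩. For all X, Y ∈ 𝔤 one has ⟨R(X,Y)Y,X⟩ = (1/4)‖ad(X)ᵀY + ad(Y)ᵀX‖² − (3/4)‖[X,Y]‖² − ⟨ad(X)ᵀX, ad(Y)ᵀY⟩ − (1/2)⟨ad(X)ᵀY, [X,Y]⟩ − (1/2)⟨ad(Y)ᵀX, [Y,X]⟩, where R is the curvature of the right-invariant metric in right trivialization. -/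
open scoped RealInnerProductSpace

noncomputable section

/-- Levi-Civita covariant derivative of a right-invariant metric in right
trivialization, written through the bracket `br` and the transpose `adT` of `ad`:
`∇_X Y = (1/2) ad(X)ᵀ Y + (1/2) ad(Y)ᵀ X - (1/2) [X, Y]`. -/
def nablaR {L : Type*} [AddCommGroup L] [Module ℝ L]
    (br adT : L → L → L) (X Y : L) : L :=
  (1 / 2 : ℝ) • adT X Y + (1 / 2 : ℝ) • adT Y X - (1 / 2 : ℝ) • br X Y

/-- Curvature of a right-invariant metric in right trivialization:
`R(X,Y)Z = ∇_X ∇_Y Z - ∇_Y ∇_X Z + ∇_{[X,Y]} Z`. -/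
def curvR {L : Type*} [AddCommGroup L] [Module ℝ L]
    (br adT : L → L → L) (X Y Z : L) : L :=
  nablaR br adT X (nablaR br adT Y Z) - nablaR br adT Y (nablaR br adT X Z)
    + nablaR br adT (br X Y) Z

/-!
The connection `∇` is metric, so pairing the second-order terms of `⟪R(X,Y)Y, X⟫` with `X` moves one
derivative to the other side and leaves
`⟪∇_X Y, ∇_Y X⟫ - ⟪∇_Y Y, ∇_X X⟫ + ⟪∇_{[X,Y]} Y, X⟫`.
Since `∇_X Y` and `∇_Y X` are half the difference and half the sum of `ad(X)ᵀY + ad(Y)ᵀX` and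
`[X,Y]`, the first pairing is a difference of squares; the second is `⟪ad(Y)ᵀY, ad(X)ᵀX⟫`, and the
third is evaluated by the Koszul formula.
-/

section Connection

variable {L : Type*} [AddCommGroup L] [Module ℝ L] {br adT : L → L → L}

lemma nablaR_self {X : L} (hX : br X X = 0) : nablaR br adT X X = adT X X := by
  rw [nablaR, hX]
  module

lemma nablaR_eq_half_smul_sub (X Y : L) :
    nablaR br adT X Y = (1 / 2 : ℝ) • (adT X Y + adT Y X - br X Y) := by
  rw [nablaR]
  module

lemma nablaR_swap_eq_half_smul_add (hskew : ∀ X Y, br X Y = -br Y X) (X Y : L) :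
    nablaR br adT Y X = (1 / 2 : ℝ) • (adT X Y + adT Y X + br X Y) := by
  rw [nablaR, hskew Y X]
  module

end Connection

section Metric

variable {E : Type*} [NormedAddCommGroup E] [InnerProductSpace ℝ E] {br adT : E → E → E}

lemma real_inner_sub_add_eq_norm_sq_sub_norm_sq (a b : E) :
    ⟪a - b, a + b⟫ = ‖a‖ ^ 2 - ‖b‖ ^ 2 := by
  rw [inner_sub_left, inner_add_right, inner_add_right, real_inner_self_eq_norm_sq,
    real_inner_self_eq_norm_sq, real_inner_comm a b]
  ring

lemma inner_nablaR_nablaR_swap (hskew : ∀ X Y, br X Y = -br Y X) (X Y : E) :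
    ⟪nablaR br adT X Y, nablaR br adT Y X⟫ =
      (1 / 4 : ℝ) * ‖adT X Y + adT Y X‖ ^ 2 - (1 / 4 : ℝ) * ‖br X Y‖ ^ 2 := by
  rw [nablaR_eq_half_smul_sub X Y, nablaR_swap_eq_half_smul_add hskew X Y,
    real_inner_smul_left, real_inner_smul_right, real_inner_sub_add_eq_norm_sq_sub_norm_sq]
  ring

lemma inner_nablaR_koszul (hadT : ∀ X Y Z, ⟪adT X Y, Z⟫ = ⟪Y, br X Z⟫) (X Y Z : E) :
    ⟪nablaR br adT X Y, Z⟫ = (1 / 2 : ℝ) * (⟪Y, br X Z⟫ + ⟪X, br Y Z⟫ - ⟪br X Y, Z⟫) := by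
  rw [nablaR_eq_half_smul_sub, real_inner_smul_left, inner_sub_left, inner_add_left, hadT, hadT]

lemma inner_nablaR_left (hskew : ∀ X Y, br X Y = -br Y X)
    (hadT : ∀ X Y Z, ⟪adT X Y, Z⟫ = ⟪Y, br X Z⟫) (X Y Z : E) :
    ⟪nablaR br adT X Y, Z⟫ = -⟪Y, nablaR br adT X Z⟫ := by
  rw [real_inner_comm _ Y, inner_nablaR_koszul hadT, inner_nablaR_koszul hadT, hskew Z Y,
    inner_neg_right, real_inner_comm Z (br X Y), real_inner_comm Y (br X Z)]
  ring

lemma inner_nablaR_br (hskew : ∀ X Y, br X Y = -br Y X)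
    (hadT : ∀ X Y Z, ⟪adT X Y, Z⟫ = ⟪Y, br X Z⟫) (X Y : E) :
    ⟪nablaR br adT (br X Y) Y, X⟫ =
      -(1 / 2 : ℝ) * (‖br X Y‖ ^ 2 + ⟪adT X Y, br X Y⟫ + ⟪adT Y X, br Y X⟫) := by
  have inner_left_br_br : ⟪Y, br (br X Y) X⟫ = -⟪adT X Y, br X Y⟫ := by
    rw [hskew (br X Y) X, inner_neg_right, hadT]
  have inner_br_br_right : ⟪br (br X Y) Y, X⟫ = ⟪adT Y X, br Y X⟫ := by
    rw [hskew (br X Y) Y, hskew Y X, inner_neg_left, inner_neg_right, hadT, real_inner_comm]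
  have inner_br_br_swap : ⟪br X Y, br Y X⟫ = -‖br X Y‖ ^ 2 := by
    rw [hskew Y X, inner_neg_right, real_inner_self_eq_norm_sq]
  rw [inner_nablaR_koszul hadT, inner_left_br_br, inner_br_br_right, inner_br_br_swap]
  ring

lemma inner_curvR (hskew : ∀ X Y, br X Y = -br Y X)
    (hadT : ∀ X Y Z, ⟪adT X Y, Z⟫ = ⟪Y, br X Z⟫) (X Y Z W : E) :
    ⟪curvR br adT X Y Z, W⟫ =
      ⟪nablaR br adT X Z, nablaR br adT Y W⟫ - ⟪nablaR br adT Y Z, nablaR br adT X W⟫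
        + ⟪nablaR br adT (br X Y) Z, W⟫ := by
  rw [curvR, inner_add_left, inner_sub_left, inner_nablaR_left hskew hadT X _ W,
    inner_nablaR_left hskew hadT Y _ W]
  ring

theorem curvature_right_invariant_metric_general (hskew : ∀ X Y, br X Y = -br Y X)
    (hadT : ∀ X Y Z, ⟪adT X Y, Z⟫ = ⟪Y, br X Z⟫) (X Y : E) :
    ⟪curvR br adT X Y Y, X⟫ =
      (1 / 4 : ℝ) * ‖adT X Y + adT Y X‖ ^ 2 - (3 / 4 : ℝ) * ‖br X Y‖ ^ 2
        - ⟪adT X X, adT Y Y⟫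
        - (1 / 2 : ℝ) * ⟪adT X Y, br X Y⟫ - (1 / 2 : ℝ) * ⟪adT Y X, br Y X⟫ := by
  have : IsAddTorsionFree E := .of_isTorsionFree ℝ E
  have br_self (Z : E) : br Z Z = 0 := self_eq_neg.mp (hskew Z Z)
  rw [inner_curvR hskew hadT, inner_nablaR_nablaR_swap hskew, inner_nablaR_br hskew hadT,
    nablaR_self (br_self X), nablaR_self (br_self Y),
    real_inner_comm (adT X X) (adT Y Y)]
  ring

end Metric

/-- The curvature of a right-invariant metric on a Lie group, in right
trivialization:
`⟨R(X,Y)Y,X⟩ = (1/4)‖ad(X)ᵀY + ad(Y)ᵀX‖² − (3/4)‖[X,Y]‖² − ⟨ad(X)ᵀX, ad(Y)ᵀY⟩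
  − (1/2)⟨ad(X)ᵀY, [X,Y]⟩ − (1/2)⟨ad(Y)ᵀX, [Y,X]⟩`. -/
theorem curvature_right_invariant_metric
    {G : Type*} [NormedAddCommGroup G] [InnerProductSpace ℝ G] [FiniteDimensional ℝ G]
    (brG : G →ₗ[ℝ] G →ₗ[ℝ] G)
    (hGalt : ∀ X : G, brG X X = 0)
    (hGjac : ∀ X Y Z : G, brG X (brG Y Z) + brG Y (brG Z X) + brG Z (brG X Y) = 0)
    (X Y : G) :
    ⟪curvR (fun a c => brG a c) (fun a c => LinearMap.adjoint (brG a) c) X Y Y, X⟫ =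
      (1 / 4 : ℝ) * ‖LinearMap.adjoint (brG X) Y + LinearMap.adjoint (brG Y) X‖ ^ 2
        - (3 / 4 : ℝ) * ‖brG X Y‖ ^ 2
        - ⟪LinearMap.adjoint (brG X) X, LinearMap.adjoint (brG Y) Y⟫
        - (1 / 2 : ℝ) * ⟪LinearMap.adjoint (brG X) Y, brG X Y⟫
        - (1 / 2 : ℝ) * ⟪LinearMap.adjoint (brG Y) X, brG Y X⟫ := by
  have hskew (A B : G) : brG A B = -brG B A := (LinearMap.IsAlt.neg hGalt B A).symm
  exact curvature_right_invariant_metric_general hskew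
    (fun A B C => LinearMap.adjoint_inner_left (brG A) C B) X Y
end
end

section
/- Let 𝔤 ⋉ 𝔥 be the semidirect product of two finite-dimensional real Lie algebras with inner products, with action b and associated bilinear map h. A differentiable curve (u,α) : ℝ → 𝔤 × 𝔥 satisfies the geodesic equation of the right-invariant metric on 𝔤 ⋉ 𝔥, i.e. (u,α)'(t) = −ad(u(t),α(t))ᵀ(u(t),α(t)), if and only if u'(t) = −ad(u(t))ᵀu(t) + h(α(t),α(t)) and α'(t) = −ad(α(t))ᵀα(t) − b(u(t))ᵀα(t) for all t. -/
open scoped RealInnerProductSpace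

noncomputable section

/-- The semidirect product Lie bracket on `G × H` determined by the brackets of
`G` and `H` and the action `b : G → End(H)`. -/
def sdBr {G H : Type*} [AddCommGroup G] [Module ℝ G] [AddCommGroup H] [Module ℝ H]
    (brG : G →ₗ[ℝ] G →ₗ[ℝ] G) (brH : H →ₗ[ℝ] H →ₗ[ℝ] H)
    (b : G →ₗ[ℝ] H →ₗ[ℝ] H) (p q : G × H) : G × H :=
  (brG p.1 q.1, brH p.2 q.2 + b p.1 q.2 - b q.1 p.2)

/-!
Pairing `ad(p)ᵀ q` with `(Z, 0)` and with `(0, Z)` isolates its two components, so that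
`ad(p)ᵀ q = (ad(p₁)ᵀ q₁ - h(p₂, q₂), ad(p₂)ᵀ q₂ + b(p₁)ᵀ q₂)`; the term `-h` comes from the summand
`-b(r₁) p₂` of the bracket `[p, r]`. The geodesic equation is the case `p = q = (u, α)`.
-/

section Transpose

variable {G H : Type*} [NormedAddCommGroup G] [InnerProductSpace ℝ G]
  [NormedAddCommGroup H] [InnerProductSpace ℝ H]
  {brG : G →ₗ[ℝ] G →ₗ[ℝ] G} {brH : H →ₗ[ℝ] H →ₗ[ℝ] H} {b : G →ₗ[ℝ] H →ₗ[ℝ] H}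
  {adTP : G × H → G × H → G × H}

theorem fst_sdBr_transpose {adTG : G → G → G} {h : H → H → G}
    (hadTP : ∀ p q r : G × H,
      ⟪(adTP p q).1, r.1⟫ + ⟪(adTP p q).2, r.2⟫ =
        ⟪q.1, (sdBr brG brH b p r).1⟫ + ⟪q.2, (sdBr brG brH b p r).2⟫)
    (hadTG : ∀ X Y Z : G, ⟪adTG X Y, Z⟫ = ⟪Y, brG X Z⟫)
    (hh : ∀ (Y₁ Y₂ : H) (X : G), ⟪h Y₁ Y₂, X⟫ = ⟪b X Y₁, Y₂⟫) (p q : G × H) :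
    (adTP p q).1 = adTG p.1 q.1 - h p.2 q.2 := by
  refine ext_inner_right ℝ fun Z => ?_
  calc ⟪(adTP p q).1, Z⟫
      = ⟪q.1, brG p.1 Z⟫ - ⟪q.2, b Z p.2⟫ := by
        simpa [sdBr, ← sub_eq_add_neg] using hadTP p q (Z, 0)
    _ = ⟪adTG p.1 q.1 - h p.2 q.2, Z⟫ := by
        rw [inner_sub_left, hadTG, hh, real_inner_comm q.2]

theorem snd_sdBr_transpose {adTH : H → H → H} {bT : G → H → H}
    (hadTP : ∀ p q r : G × H,
      ⟪(adTP p q).1, r.1⟫ + ⟪(adTP p q).2, r.2⟫ =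
        ⟪q.1, (sdBr brG brH b p r).1⟫ + ⟪q.2, (sdBr brG brH b p r).2⟫)
    (hadTH : ∀ X Y Z : H, ⟪adTH X Y, Z⟫ = ⟪Y, brH X Z⟫)
    (hbT : ∀ (X : G) (Y Z : H), ⟪bT X Y, Z⟫ = ⟪Y, b X Z⟫) (p q : G × H) :
    (adTP p q).2 = adTH p.2 q.2 + bT p.1 q.2 := by
  refine ext_inner_right ℝ fun Z => ?_
  calc ⟪(adTP p q).2, Z⟫
      = ⟪q.2, brH p.2 Z⟫ + ⟪q.2, b p.1 Z⟫ := by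
        simpa [sdBr, inner_add_right] using hadTP p q (0, Z)
    _ = ⟪adTH p.2 q.2 + bT p.1 q.2, Z⟫ := by
        rw [inner_add_left, hadTH, hbT]

end Transpose

/-- In infinite dimensions the transposes `adTG`, `adTH` and `bT` need not exist, so they are given
by their defining identities. -/
theorem semidirect_geodesic_equation_general
    {G H : Type*}
    [NormedAddCommGroup G] [InnerProductSpace ℝ G] [NormedAddCommGroup H] [InnerProductSpace ℝ H]
    {brG : G →ₗ[ℝ] G →ₗ[ℝ] G} {brH : H →ₗ[ℝ] H →ₗ[ℝ] H} {b : G →ₗ[ℝ] H →ₗ[ℝ] H}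
    {adTG : G → G → G} (hadTG : ∀ X Y Z : G, ⟪adTG X Y, Z⟫ = ⟪Y, brG X Z⟫)
    {adTH : H → H → H} (hadTH : ∀ X Y Z : H, ⟪adTH X Y, Z⟫ = ⟪Y, brH X Z⟫)
    {bT : G → H → H} (hbT : ∀ (X : G) (Y Z : H), ⟪bT X Y, Z⟫ = ⟪Y, b X Z⟫)
    {h : H → H → G} (hh : ∀ (Y₁ Y₂ : H) (X : G), ⟪h Y₁ Y₂, X⟫ = ⟪b X Y₁, Y₂⟫)
    {adTP : G × H → G × H → G × H}
    (hadTP : ∀ p q r : G × H,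
      ⟪(adTP p q).1, r.1⟫ + ⟪(adTP p q).2, r.2⟫ =
        ⟪q.1, (sdBr brG brH b p r).1⟫ + ⟪q.2, (sdBr brG brH b p r).2⟫)
    {u : ℝ → G} {α : ℝ → H} (hu : Differentiable ℝ u) (hα : Differentiable ℝ α) :
    (∀ t : ℝ, deriv (fun s => (u s, α s)) t = - adTP (u t, α t) (u t, α t)) ↔
      ((∀ t : ℝ, deriv u t = - adTG (u t) (u t) + h (α t) (α t)) ∧
        (∀ t : ℝ, deriv α t = - adTH (α t) (α t) - bT (u t) (α t))) := by
  rw [← forall_and]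
  refine forall_congr' fun t => ?_
  have deriv_pair : deriv (fun s => (u s, α s)) t = (deriv u t, deriv α t) :=
    ((hu t).hasDerivAt.prodMk (hα t).hasDerivAt).deriv
  have fst_eq : (-adTP (u t, α t) (u t, α t)).1 = -adTG (u t) (u t) + h (α t) (α t) := by
    rw [Prod.fst_neg, fst_sdBr_transpose hadTP hadTG hh, neg_sub, sub_eq_neg_add]
  have snd_eq : (-adTP (u t, α t) (u t, α t)).2 = -adTH (α t) (α t) - bT (u t) (α t) := by
    rw [Prod.snd_neg, snd_sdBr_transpose hadTP hadTH hbT, neg_add']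
  rw [deriv_pair, Prod.ext_iff, fst_eq, snd_eq]

/-- Geodesic equation on a semidirect product `𝔤 ⋉ 𝔥` with right invariant metric:
`u_t = −ad(u)ᵀu + h(α,α)`, `α_t = −ad(α)ᵀα − b(u)ᵀα`. -/
theorem semidirect_geodesic_equation
    {G H : Type*}
    [NormedAddCommGroup G] [InnerProductSpace ℝ G] [FiniteDimensional ℝ G]
    [NormedAddCommGroup H] [InnerProductSpace ℝ H] [FiniteDimensional ℝ H]
    (brG : G →ₗ[ℝ] G →ₗ[ℝ] G) (brH : H →ₗ[ℝ] H →ₗ[ℝ] H)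
    (hGalt : ∀ X : G, brG X X = 0)
    (hGjac : ∀ X Y Z : G, brG X (brG Y Z) + brG Y (brG Z X) + brG Z (brG X Y) = 0)
    (hHalt : ∀ Y : H, brH Y Y = 0)
    (hHjac : ∀ X Y Z : H, brH X (brH Y Z) + brH Y (brH Z X) + brH Z (brH X Y) = 0)
    (b : G →ₗ[ℝ] H →ₗ[ℝ] H)
    (hbhom : ∀ X₁ X₂ : G, b (brG X₁ X₂) = b X₁ ∘ₗ b X₂ - b X₂ ∘ₗ b X₁)
    (hbder : ∀ (X : G) (Y₁ Y₂ : H), b X (brH Y₁ Y₂) = brH (b X Y₁) Y₂ + brH Y₁ (b X Y₂))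
    (h : H → H → G)
    (hh : ∀ (Y₁ Y₂ : H) (X : G), ⟪h Y₁ Y₂, X⟫ = ⟪b X Y₁, Y₂⟫)
    (adTP : G × H → G × H → G × H)
    (hadTP : ∀ p q r : G × H,
      ⟪(adTP p q).1, r.1⟫ + ⟪(adTP p q).2, r.2⟫ =
        ⟪q.1, (sdBr brG brH b p r).1⟫ + ⟪q.2, (sdBr brG brH b p r).2⟫)
    (u : ℝ → G) (α : ℝ → H) (hu : Differentiable ℝ u) (hα : Differentiable ℝ α) :
    (∀ t : ℝ, deriv (fun s => (u s, α s)) t = - adTP (u t, α t) (u t, α t)) ↔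
      ((∀ t : ℝ, deriv u t = - LinearMap.adjoint (brG (u t)) (u t) + h (α t) (α t)) ∧
        (∀ t : ℝ, deriv α t =
          - LinearMap.adjoint (brH (α t)) (α t) - LinearMap.adjoint (b (u t)) (α t))) := by
  exact semidirect_geodesic_equation_general
    (fun X _ _ => LinearMap.adjoint_inner_left (brG X) _ _)
    (fun Y _ _ => LinearMap.adjoint_inner_left (brH Y) _ _)
    (fun X _ _ => LinearMap.adjoint_inner_left (b X) _ _) hh hadTP hu hα
end
end

section
/- Let 𝔤 ⋉ 𝔥 be the semidirect product of two finite-dimensional real Lie algebras with inner products, with action b, and let R̃, R^G denote the curvatures of the right-invariant metrics on 𝔤 ⋉ 𝔥 and 𝔤. Then for all X₁, X₂ ∈ 𝔤: ⟨R̃((X₁,0),(X₂,0))(X₂,0),(X₁,0)⟩ = ⟨R^G(X₁,X₂)X₂,X₁⟩. -/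
open scoped RealInnerProductSpace

noncomputable section

/-! The inclusion of `𝔤` into `𝔤 ⋉ 𝔥` intertwines not only the brackets but also the transposes of
`ad`, because for `X ∈ 𝔤` the map `ad(X)` preserves both summands. The connection and the curvature
are built from these two operations alone, so the inclusion intertwines them as well. -/

section Naturality

variable {L M : Type*} [AddCommGroup L] [Module ℝ L] [AddCommGroup M] [Module ℝ M]
  {brL adTL : L → L → L} {brM adTM : M → M → M} (f : L →ₗ[ℝ] M)

theorem map_nablaR (map_br : ∀ X Y, f (brL X Y) = brM (f X) (f Y))
    (map_adT : ∀ X Y, f (adTL X Y) = adTM (f X) (f Y)) (X Y : L) :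
    f (nablaR brL adTL X Y) = nablaR brM adTM (f X) (f Y) := by
  simp only [nablaR, map_add, map_sub, map_smul, map_br, map_adT]

theorem map_curvR (map_br : ∀ X Y, f (brL X Y) = brM (f X) (f Y))
    (map_adT : ∀ X Y, f (adTL X Y) = adTM (f X) (f Y)) (X Y Z : L) :
    f (curvR brL adTL X Y Z) = curvR brM adTM (f X) (f Y) (f Z) := by
  simp only [curvR, map_add, map_sub, map_nablaR f map_br map_adT, map_br]

end Naturality

theorem sdBr_horizontal {G H : Type*} [AddCommGroup G] [Module ℝ G] [AddCommGroup H] [Module ℝ H]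
    (brG : G →ₗ[ℝ] G →ₗ[ℝ] G) (brH : H →ₗ[ℝ] H →ₗ[ℝ] H) (b : G →ₗ[ℝ] H →ₗ[ℝ] H) (X Y : G) :
    sdBr brG brH b (X, 0) (Y, 0) = (brG X Y, 0) := by
  simp [sdBr]

section Transpose

variable {G H : Type*} [NormedAddCommGroup G] [InnerProductSpace ℝ G]
  [NormedAddCommGroup H] [InnerProductSpace ℝ H]
  {brG : G →ₗ[ℝ] G →ₗ[ℝ] G} {brH : H →ₗ[ℝ] H →ₗ[ℝ] H} {b : G →ₗ[ℝ] H →ₗ[ℝ] H}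
  {adTG : G → G → G} {adTP : G × H → G × H → G × H}

theorem adT_sdBr_horizontal (hadTG : ∀ X Y Z : G, ⟪adTG X Y, Z⟫ = ⟪Y, brG X Z⟫)
    (hadTP : ∀ p q r : G × H,
      ⟪(adTP p q).1, r.1⟫ + ⟪(adTP p q).2, r.2⟫ =
        ⟪q.1, (sdBr brG brH b p r).1⟫ + ⟪q.2, (sdBr brG brH b p r).2⟫)
    (X Y : G) : adTP (X, 0) (Y, 0) = (adTG X Y, 0) := by
  have inner_fst (Z : G) : ⟪(adTP (X, 0) (Y, 0)).1, Z⟫ = ⟪adTG X Y, Z⟫ := by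
    simpa [sdBr, hadTG] using hadTP (X, 0) (Y, 0) (Z, 0)
  have inner_snd (W : H) : ⟪(adTP (X, 0) (Y, 0)).2, W⟫ = ⟪(0 : H), W⟫ := by
    simpa [sdBr] using hadTP (X, 0) (Y, 0) (0, W)
  exact Prod.ext (ext_inner_right ℝ inner_fst) (ext_inner_right ℝ inner_snd)

theorem semidirect_curvature_horizontal_general
    (hadTG : ∀ X Y Z : G, ⟪adTG X Y, Z⟫ = ⟪Y, brG X Z⟫)
    (hadTP : ∀ p q r : G × H,
      ⟪(adTP p q).1, r.1⟫ + ⟪(adTP p q).2, r.2⟫ =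
        ⟪q.1, (sdBr brG brH b p r).1⟫ + ⟪q.2, (sdBr brG brH b p r).2⟫)
    (X Y Z : G) :
    curvR (sdBr brG brH b) adTP (X, 0) (Y, 0) (Z, 0) =
      (curvR (fun A C => brG A C) adTG X Y Z, 0) :=
  (map_curvR (LinearMap.inl ℝ G H) (fun A C => (sdBr_horizontal brG brH b A C).symm)
    (fun A C => (adT_sdBr_horizontal hadTG hadTP A C).symm) X Y Z).symm

end Transpose

/-- The sectional curvature numerator of a plane spanned by `(X₁,0)` and `(X₂,0)`
in the semidirect product equals that of the plane spanned by `X₁, X₂` in `𝔤`. -/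
theorem semidirect_curvature_horizontal
    {G H : Type*}
    [NormedAddCommGroup G] [InnerProductSpace ℝ G] [FiniteDimensional ℝ G]
    [NormedAddCommGroup H] [InnerProductSpace ℝ H] [FiniteDimensional ℝ H]
    (brG : G →ₗ[ℝ] G →ₗ[ℝ] G) (brH : H →ₗ[ℝ] H →ₗ[ℝ] H)
    (hGalt : ∀ X : G, brG X X = 0)
    (hGjac : ∀ X Y Z : G, brG X (brG Y Z) + brG Y (brG Z X) + brG Z (brG X Y) = 0)
    (hHalt : ∀ Y : H, brH Y Y = 0)
    (hHjac : ∀ X Y Z : H, brH X (brH Y Z) + brH Y (brH Z X) + brH Z (brH X Y) = 0)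
    (b : G →ₗ[ℝ] H →ₗ[ℝ] H)
    (hbhom : ∀ X₁ X₂ : G, b (brG X₁ X₂) = b X₁ ∘ₗ b X₂ - b X₂ ∘ₗ b X₁)
    (hbder : ∀ (X : G) (Y₁ Y₂ : H), b X (brH Y₁ Y₂) = brH (b X Y₁) Y₂ + brH Y₁ (b X Y₂))
    (h : H → H → G)
    (hh : ∀ (Y₁ Y₂ : H) (X : G), ⟪h Y₁ Y₂, X⟫ = ⟪b X Y₁, Y₂⟫)
    (adTP : G × H → G × H → G × H)
    (hadTP : ∀ p q r : G × H,
      ⟪(adTP p q).1, r.1⟫ + ⟪(adTP p q).2, r.2⟫ =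
        ⟪q.1, (sdBr brG brH b p r).1⟫ + ⟪q.2, (sdBr brG brH b p r).2⟫)
    (X₁ X₂ : G) :
    ⟪(curvR (sdBr brG brH b) adTP (X₁, (0 : H)) (X₂, 0) (X₂, 0)).1, X₁⟫
      + ⟪(curvR (sdBr brG brH b) adTP (X₁, (0 : H)) (X₂, 0) (X₂, 0)).2, (0 : H)⟫ =
      ⟪curvR (fun a c => brG a c) (fun a c => LinearMap.adjoint (brG a) c) X₁ X₂ X₂, X₁⟫ := by
  rw [semidirect_curvature_horizontal_general
    (fun X Y Z => LinearMap.adjoint_inner_left (brG X) Z Y) hadTP, inner_zero_right, add_zero]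
end
end

section
/- Let 𝔤 ⋉ 𝔥 be the semidirect product of two finite-dimensional real Lie algebras with inner products, with action b, associated bilinear map h, and curvature R̃ of the right-invariant metric. Then for all X ∈ 𝔤 and Y ∈ 𝔥: ⟨R̃((X,0),(0,Y))(0,Y),(X,0)⟩ = ⟨h(Y,Y), ad(X)ᵀX⟩ − (1/4)‖(b(X)+b(X)ᵀ)Y‖² + (1/2)‖b(X)ᵀY‖² − (1/2)‖b(X)Y‖². -/
open scoped RealInnerProductSpace

noncomputable section

/-!
The connection of a right-invariant metric is metric, `⟨∇_x u, v⟩ = -⟨u, ∇_x v⟩`, so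
`⟨R(x, y)z, w⟩ = ⟨∇_x z, ∇_y w⟩ - ⟨∇_y z, ∇_x w⟩ + ⟨∇_{[x, y]} z, w⟩`
involves only first covariant derivatives. For `x = w = (X, 0)` and `y = z = (0, Y)` these are
`∇_x y = (0, (b(X)ᵀY - b(X)Y) / 2)`, `∇_y x = (0, (b(X)ᵀY + b(X)Y) / 2)`,
`∇_x x = (ad(X)ᵀX, 0)` and `∇_y y = (-h(Y, Y), ad(Y)ᵀY)`.
-/

section RightInvariantConnection

variable {L : Type*} [AddCommGroup L] [Module ℝ L] {B : LinearMap.BilinForm ℝ L}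
  {br adT : L → L → L}

lemma nablaR_self_of_br_self_eq_zero {x : L} (hx : br x x = 0) :
    nablaR br adT x x = adT x x := by
  rw [nablaR, hx]
  module

lemma bilinForm_nablaR (hadT : ∀ x, B.IsAdjointPair B (adT x) (br x)) (x u v : L) :
    B (nablaR br adT x u) v = (B u (br x v) + B x (br u v) - B (br x u) v) / 2 := by
  simp only [nablaR, map_add, map_sub, map_smul, LinearMap.add_apply, LinearMap.sub_apply,
    LinearMap.smul_apply, smul_eq_mul, hadT x u v, hadT u x v]
  ring

lemma bilinForm_nablaR_skew (hB : B.IsSymm) (hbr : ∀ x y, br x y = -br y x)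
    (hadT : ∀ x, B.IsAdjointPair B (adT x) (br x)) (x u v : L) :
    B (nablaR br adT x u) v = -B u (nablaR br adT x v) := by
  rw [hB.eq u (nablaR br adT x v), bilinForm_nablaR hadT, bilinForm_nablaR hadT, hbr v u, map_neg,
    hB.eq u (br x v), hB.eq v (br x u)]
  ring

lemma bilinForm_curvR (hB : B.IsSymm) (hbr : ∀ x y, br x y = -br y x)
    (hadT : ∀ x, B.IsAdjointPair B (adT x) (br x)) (x y z w : L) :
    B (curvR br adT x y z) w =
      B (nablaR br adT x z) (nablaR br adT y w) - B (nablaR br adT y z) (nablaR br adT x w)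
        + B (nablaR br adT (br x y) z) w := by
  simp only [curvR, map_add, map_sub, LinearMap.add_apply, LinearMap.sub_apply,
    bilinForm_nablaR_skew hB hbr hadT x (nablaR br adT y z) w,
    bilinForm_nablaR_skew hB hbr hadT y (nablaR br adT x z) w]
  ring

end RightInvariantConnection

section ProdInner

variable {G H : Type*} [NormedAddCommGroup G] [InnerProductSpace ℝ G]
  [NormedAddCommGroup H] [InnerProductSpace ℝ H]

variable (G H) in
/-- The orthogonal-sum inner product `⟪p.1, q.1⟫ + ⟪p.2, q.2⟫` on `G × H`, as a bilinear form: the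
norm that `G × H` carries in Mathlib is the sup norm, so it has no inner product of its own. -/
def prodInner : LinearMap.BilinForm ℝ (G × H) :=
  (innerₗ G).compl₁₂ (.fst ℝ G H) (.fst ℝ G H) + (innerₗ H).compl₁₂ (.snd ℝ G H) (.snd ℝ G H)

lemma prodInner_apply (p q : G × H) : prodInner G H p q = ⟪p.1, q.1⟫ + ⟪p.2, q.2⟫ := rfl

lemma prodInner_isSymm : (prodInner G H).IsSymm :=
  ⟨fun p q => by simp [prodInner_apply, real_inner_comm]⟩

lemma ext_prodInner {p q : G × H} (hpq : ∀ r, prodInner G H p r = prodInner G H q r) : p = q :=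
  Prod.ext (ext_inner_right ℝ fun Z => by simpa [prodInner_apply] using hpq (Z, 0))
    (ext_inner_right ℝ fun W => by simpa [prodInner_apply] using hpq (0, W))

end ProdInner

lemma sdBr_skew {G H : Type*} [AddCommGroup G] [Module ℝ G] [AddCommGroup H] [Module ℝ H]
    {brG : G →ₗ[ℝ] G →ₗ[ℝ] G} {brH : H →ₗ[ℝ] H →ₗ[ℝ] H} (hG : brG.IsAlt) (hH : brH.IsAlt)
    (b : G →ₗ[ℝ] H →ₗ[ℝ] H) (p q : G × H) :
    sdBr brG brH b p q = -sdBr brG brH b q p := by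
  simp only [sdBr, ← hG.neg q.1 p.1, ← hH.neg q.2 p.2, Prod.neg_mk, Prod.mk.injEq, true_and]
  abel

section SemidirectProduct

variable {G H : Type*} [NormedAddCommGroup G] [InnerProductSpace ℝ G]
  [NormedAddCommGroup H] [InnerProductSpace ℝ H]
  {brG : G →ₗ[ℝ] G →ₗ[ℝ] G} {brH : H →ₗ[ℝ] H →ₗ[ℝ] H} {b : G →ₗ[ℝ] H →ₗ[ℝ] H}
  {h : H → H → G} {adGT : G → G → G} {bT : G → H → H} {adTP : G × H → G × H → G × H}

lemma adTranspose_sdBr_left_left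
    (hadGT : ∀ X, (innerₗ G).IsAdjointPair (innerₗ G) (adGT X) (brG X))
    (hadTP : ∀ p, (prodInner G H).IsAdjointPair (prodInner G H) (adTP p) (sdBr brG brH b p))
    (X X' : G) : adTP (X, 0) (X', 0) = (adGT X X', 0) :=
  ext_prodInner fun r => by
    simpa [hadTP (X, 0) (X', 0) r, prodInner_apply, sdBr] using (hadGT X X' r.1).symm

lemma adTranspose_sdBr_left_right
    (hbT : ∀ X, (innerₗ H).IsAdjointPair (innerₗ H) (bT X) (b X))
    (hadTP : ∀ p, (prodInner G H).IsAdjointPair (prodInner G H) (adTP p) (sdBr brG brH b p))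
    (X : G) (Y : H) : adTP (X, 0) (0, Y) = (0, bT X Y) :=
  ext_prodInner fun r => by
    simpa [hadTP (X, 0) (0, Y) r, prodInner_apply, sdBr] using (hbT X Y r.2).symm

lemma adTranspose_sdBr_right_left
    (hadTP : ∀ p, (prodInner G H).IsAdjointPair (prodInner G H) (adTP p) (sdBr brG brH b p))
    (Y : H) (X : G) : adTP (0, Y) (X, 0) = 0 :=
  ext_prodInner fun r => by simp [hadTP (0, Y) (X, 0) r, prodInner_apply, sdBr]

lemma adTranspose_sdBr_right_right_fst
    (hh : ∀ (Y₁ Y₂ : H) (X : G), ⟪h Y₁ Y₂, X⟫ = ⟪b X Y₁, Y₂⟫)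
    (hadTP : ∀ p, (prodInner G H).IsAdjointPair (prodInner G H) (adTP p) (sdBr brG brH b p))
    (Y Y' : H) : (adTP (0, Y) (0, Y')).1 = -h Y Y' :=
  ext_inner_right ℝ fun Z => by
    simpa [prodInner_apply, sdBr, hh, real_inner_comm] using hadTP (0, Y) (0, Y') (Z, 0)

lemma nablaR_sdBr_left_right (hbT : ∀ X, (innerₗ H).IsAdjointPair (innerₗ H) (bT X) (b X))
    (hadTP : ∀ p, (prodInner G H).IsAdjointPair (prodInner G H) (adTP p) (sdBr brG brH b p))
    (X : G) (Y : H) :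
    nablaR (sdBr brG brH b) adTP (X, 0) (0, Y) = (0, (1 / 2 : ℝ) • (bT X Y - b X Y)) := by
  simp [nablaR, adTranspose_sdBr_left_right hbT hadTP, adTranspose_sdBr_right_left hadTP, sdBr,
    smul_sub]

lemma nablaR_sdBr_right_left (hbT : ∀ X, (innerₗ H).IsAdjointPair (innerₗ H) (bT X) (b X))
    (hadTP : ∀ p, (prodInner G H).IsAdjointPair (prodInner G H) (adTP p) (sdBr brG brH b p))
    (Y : H) (X : G) :
    nablaR (sdBr brG brH b) adTP (0, Y) (X, 0) = (0, (1 / 2 : ℝ) • (bT X Y + b X Y)) := by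
  simp [nablaR, adTranspose_sdBr_left_right hbT hadTP, adTranspose_sdBr_right_left hadTP, sdBr,
    smul_add]

lemma prodInner_nablaR_mixed (hbT : ∀ X, (innerₗ H).IsAdjointPair (innerₗ H) (bT X) (b X))
    (hadTP : ∀ p, (prodInner G H).IsAdjointPair (prodInner G H) (adTP p) (sdBr brG brH b p))
    (X : G) (Y : H) :
    prodInner G H (nablaR (sdBr brG brH b) adTP (X, 0) (0, Y))
        (nablaR (sdBr brG brH b) adTP (0, Y) (X, 0)) = (‖bT X Y‖ ^ 2 - ‖b X Y‖ ^ 2) / 4 := by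
  rw [nablaR_sdBr_left_right hbT hadTP, nablaR_sdBr_right_left hbT hadTP, prodInner_apply]
  simp only [inner_zero_left, real_inner_smul_left, real_inner_smul_right, inner_sub_left,
    inner_add_right, real_inner_self_eq_norm_sq, real_inner_comm (bT X Y) (b X Y)]
  ring

lemma prodInner_nablaR_self (hG : brG.IsAlt) (hH : brH.IsAlt)
    (hh : ∀ (Y₁ Y₂ : H) (X : G), ⟪h Y₁ Y₂, X⟫ = ⟪b X Y₁, Y₂⟫)
    (hadGT : ∀ X, (innerₗ G).IsAdjointPair (innerₗ G) (adGT X) (brG X))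
    (hadTP : ∀ p, (prodInner G H).IsAdjointPair (prodInner G H) (adTP p) (sdBr brG brH b p))
    (X : G) (Y : H) :
    prodInner G H (nablaR (sdBr brG brH b) adTP (0, Y) (0, Y))
        (nablaR (sdBr brG brH b) adTP (X, 0) (X, 0)) = -⟪h Y Y, adGT X X⟫ := by
  rw [nablaR_self_of_br_self_eq_zero (by simp [sdBr, hH.self_eq_zero]),
    nablaR_self_of_br_self_eq_zero (by simp [sdBr, hG.self_eq_zero]),
    adTranspose_sdBr_left_left hadGT hadTP, prodInner_apply,
    adTranspose_sdBr_right_right_fst hh hadTP, inner_neg_left, inner_zero_right, add_zero]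

lemma prodInner_nablaR_bracket_mixed (hbT : ∀ X, (innerₗ H).IsAdjointPair (innerₗ H) (bT X) (b X))
    (hadTP : ∀ p, (prodInner G H).IsAdjointPair (prodInner G H) (adTP p) (sdBr brG brH b p))
    (X : G) (Y : H) :
    prodInner G H (nablaR (sdBr brG brH b) adTP (sdBr brG brH b (X, 0) (0, Y)) (0, Y)) (X, 0) =
      -(⟪bT X Y, b X Y⟫ + ‖b X Y‖ ^ 2) / 2 := by
  have transpose_b : ⟪bT X Y, b X Y⟫ = ⟪Y, b X (b X Y)⟫ := hbT X Y (b X Y)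
  rw [bilinForm_nablaR hadTP, transpose_b, ← real_inner_self_eq_norm_sq]
  simp only [prodInner_apply, sdBr, map_zero, LinearMap.zero_apply, zero_add, add_zero, sub_zero,
    zero_sub, inner_zero_left, inner_zero_right, inner_neg_right]
  ring

/-- Transposes may fail to exist in infinite dimension, so `adGT X` and `bT X`, which stand for
`ad(X)ᵀ` and `b(X)ᵀ`, are given as data. -/
theorem semidirect_curvature_mixed_general (hG : brG.IsAlt) (hH : brH.IsAlt)
    (hh : ∀ (Y₁ Y₂ : H) (X : G), ⟪h Y₁ Y₂, X⟫ = ⟪b X Y₁, Y₂⟫)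
    (hadGT : ∀ X, (innerₗ G).IsAdjointPair (innerₗ G) (adGT X) (brG X))
    (hbT : ∀ X, (innerₗ H).IsAdjointPair (innerₗ H) (bT X) (b X))
    (hadTP : ∀ p, (prodInner G H).IsAdjointPair (prodInner G H) (adTP p) (sdBr brG brH b p))
    (X : G) (Y : H) :
    prodInner G H (curvR (sdBr brG brH b) adTP (X, 0) (0, Y) (0, Y)) (X, 0) =
      ⟪h Y Y, adGT X X⟫ - (1 / 4 : ℝ) * ‖b X Y + bT X Y‖ ^ 2
        + (1 / 2 : ℝ) * ‖bT X Y‖ ^ 2 - (1 / 2 : ℝ) * ‖b X Y‖ ^ 2 := by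
  rw [bilinForm_curvR prodInner_isSymm (sdBr_skew hG hH b) hadTP,
    prodInner_nablaR_mixed hbT hadTP, prodInner_nablaR_self hG hH hh hadGT hadTP,
    prodInner_nablaR_bracket_mixed hbT hadTP, norm_add_sq_real, real_inner_comm (bT X Y)]
  ring

end SemidirectProduct

/-- The sectional curvature numerator of a mixed plane spanned by `(X,0)` and
`(0,Y)` in the semidirect product:
`⟨h(Y,Y), ad(X)ᵀX⟩ − (1/4)‖(b(X)+b(X)ᵀ)Y‖² + (1/2)‖b(X)ᵀY‖² − (1/2)‖b(X)Y‖²`. -/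
theorem semidirect_curvature_mixed
    {G H : Type*}
    [NormedAddCommGroup G] [InnerProductSpace ℝ G] [FiniteDimensional ℝ G]
    [NormedAddCommGroup H] [InnerProductSpace ℝ H] [FiniteDimensional ℝ H]
    (brG : G →ₗ[ℝ] G →ₗ[ℝ] G) (brH : H →ₗ[ℝ] H →ₗ[ℝ] H)
    (hGalt : ∀ X : G, brG X X = 0)
    (hGjac : ∀ X Y Z : G, brG X (brG Y Z) + brG Y (brG Z X) + brG Z (brG X Y) = 0)
    (hHalt : ∀ Y : H, brH Y Y = 0)
    (hHjac : ∀ X Y Z : H, brH X (brH Y Z) + brH Y (brH Z X) + brH Z (brH X Y) = 0)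
    (b : G →ₗ[ℝ] H →ₗ[ℝ] H)
    (hbhom : ∀ X₁ X₂ : G, b (brG X₁ X₂) = b X₁ ∘ₗ b X₂ - b X₂ ∘ₗ b X₁)
    (hbder : ∀ (X : G) (Y₁ Y₂ : H), b X (brH Y₁ Y₂) = brH (b X Y₁) Y₂ + brH Y₁ (b X Y₂))
    (h : H → H → G)
    (hh : ∀ (Y₁ Y₂ : H) (X : G), ⟪h Y₁ Y₂, X⟫ = ⟪b X Y₁, Y₂⟫)
    (adTP : G × H → G × H → G × H)
    (hadTP : ∀ p q r : G × H,
      ⟪(adTP p q).1, r.1⟫ + ⟪(adTP p q).2, r.2⟫ =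
        ⟪q.1, (sdBr brG brH b p r).1⟫ + ⟪q.2, (sdBr brG brH b p r).2⟫)
    (X : G) (Y : H) :
    ⟪(curvR (sdBr brG brH b) adTP (X, (0 : H)) ((0 : G), Y) ((0 : G), Y)).1, X⟫
      + ⟪(curvR (sdBr brG brH b) adTP (X, (0 : H)) ((0 : G), Y) ((0 : G), Y)).2, (0 : H)⟫ =
      ⟪h Y Y, LinearMap.adjoint (brG X) X⟫
        - (1 / 4 : ℝ) * ‖b X Y + LinearMap.adjoint (b X) Y‖ ^ 2
        + (1 / 2 : ℝ) * ‖LinearMap.adjoint (b X) Y‖ ^ 2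
        - (1 / 2 : ℝ) * ‖b X Y‖ ^ 2 := by
  exact semidirect_curvature_mixed_general hGalt hHalt hh
    (fun X Z W => LinearMap.adjoint_inner_left (brG X) W Z)
    (fun X Y W => LinearMap.adjoint_inner_left (b X) W Y) hadTP X Y
end
end

section
/- Let 𝔤 ⋉ 𝔥 be the semidirect product of two finite-dimensional real Lie algebras with inner products, with action b, associated bilinear map h, curvature R̃ of the right-invariant metric, and R^H the curvature on 𝔥. Then for all Y₁, Y₂ ∈ 𝔥: ⟨R̃((0,Y₁),(0,Y₂))(0,Y₂),(0,Y₁)⟩ = ⟨R^H(Y₁,Y₂)Y₂,Y₁⟩ + (1/4)‖h(Y₁,Y₂)+h(Y₂,Y₁)‖² − ⟨h(Y₁,Y₁),h(Y₂,Y₂)⟩. -/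
open scoped RealInnerProductSpace

noncomputable section

/-!
The subspace `0 × 𝔥` carries the second fundamental form `II(Y, Z) = -(h(Y, Z) + h(Z, Y)) / 2`: the
covariant derivative of `(0, Z)` along `(0, Y)` is `(II(Y, Z), ∇_Y Z)`, and the adjoint relation
`⟨∇_{(0, Y)} (X, 0), (0, Z)⟩ = -⟨X, II(Y, Z)⟩` holds. Expanding the curvature with these two facts
gives the Gauss equation, and the claim is its value on the plane spanned by `Y₁` and `Y₂`.
-/

/-- The second fundamental form of `0 × 𝔥` in the semidirect product `𝔤 ⋉ 𝔥`, as a map into the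
normal space `𝔤`, expressed through the map `h` dual to the action of `𝔤` on `𝔥`. -/
def secondFundForm {G H : Type*} [AddCommGroup G] [Module ℝ G] (h : H → H → G) (Y Z : H) : G :=
  -(1 / 2 : ℝ) • (h Y Z + h Z Y)

theorem secondFundForm_comm {G H : Type*} [AddCommGroup G] [Module ℝ G] (h : H → H → G)
    (Y Z : H) : secondFundForm h Y Z = secondFundForm h Z Y := by
  rw [secondFundForm, secondFundForm, add_comm]

theorem secondFundForm_self {G H : Type*} [AddCommGroup G] [Module ℝ G] (h : H → H → G)
    (Y : H) : secondFundForm h Y Y = -h Y Y := by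
  rw [secondFundForm]
  module

theorem inner_secondFundForm_self {G H : Type*} [NormedAddCommGroup G] [InnerProductSpace ℝ G]
    (h : H → H → G) (Y Z : H) :
    ⟪secondFundForm h Y Z, secondFundForm h Y Z⟫ = (1 / 4 : ℝ) * ‖h Y Z + h Z Y‖ ^ 2 := by
  rw [secondFundForm, real_inner_smul_left, real_inner_smul_right, real_inner_self_eq_norm_sq]
  ring

theorem sdBr_vertical_vertical {G H : Type*}
    [AddCommGroup G] [Module ℝ G] [AddCommGroup H] [Module ℝ H]
    (brG : G →ₗ[ℝ] G →ₗ[ℝ] G) (brH : H →ₗ[ℝ] H →ₗ[ℝ] H) (b : G →ₗ[ℝ] H →ₗ[ℝ] H) (Y Z : H) :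
    sdBr brG brH b (0, Y) (0, Z) = (0, brH Y Z) := by
  simp [sdBr]

section Semidirect

variable {G H : Type*}
  [NormedAddCommGroup G] [InnerProductSpace ℝ G] [NormedAddCommGroup H] [InnerProductSpace ℝ H]
  {brG : G →ₗ[ℝ] G →ₗ[ℝ] G} {brH : H →ₗ[ℝ] H →ₗ[ℝ] H} {b : G →ₗ[ℝ] H →ₗ[ℝ] H}
  {h : H → H → G} {adTH : H → H → H} {adTP : G × H → G × H → G × H}

theorem inner_secondFundForm (hh : ∀ (Y Z : H) (X : G), ⟪h Y Z, X⟫ = ⟪b X Y, Z⟫)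
    (Y Z : H) (X : G) :
    ⟪secondFundForm h Y Z, X⟫ = -(1 / 2) * (⟪b X Y, Z⟫ + ⟪b X Z, Y⟫) := by
  rw [secondFundForm, real_inner_smul_left, inner_add_left, hh, hh]

variable
  (hadTP : ∀ p q r : G × H,
    ⟪(adTP p q).1, r.1⟫ + ⟪(adTP p q).2, r.2⟫ =
      ⟪q.1, (sdBr brG brH b p r).1⟫ + ⟪q.2, (sdBr brG brH b p r).2⟫)
include hadTP

theorem inner_sdBr_transpose_fst (p q : G × H) (X : G) :
    ⟪(adTP p q).1, X⟫ = ⟪q.1, brG p.1 X⟫ - ⟪q.2, b X p.2⟫ := by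
  simpa [sdBr, sub_eq_add_neg] using hadTP p q (X, 0)

theorem inner_sdBr_transpose_snd (p q : G × H) (Y : H) :
    ⟪(adTP p q).2, Y⟫ = ⟪q.2, brH p.2 Y⟫ + ⟪q.2, b p.1 Y⟫ := by
  simpa [sdBr, inner_add_right] using hadTP p q (0, Y)

variable (hh : ∀ (Y Z : H) (X : G), ⟪h Y Z, X⟫ = ⟪b X Y, Z⟫)
include hh

theorem nablaR_sdBr_vertical_vertical_fst (Y Z : H) :
    (nablaR (sdBr brG brH b) adTP (0, Y) (0, Z)).1 = secondFundForm h Y Z := by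
  refine ext_inner_right ℝ fun X => ?_
  rw [inner_secondFundForm hh]
  simp only [nablaR, sdBr_vertical_vertical, Prod.fst_add, Prod.fst_sub, Prod.smul_fst,
    inner_add_left, inner_sub_left, real_inner_smul_left, inner_sdBr_transpose_fst hadTP,
    inner_zero_left, real_inner_comm (b X _)]
  ring

variable (hadTH : ∀ X Y Z : H, ⟪adTH X Y, Z⟫ = ⟪Y, brH X Z⟫)
include hadTH

theorem inner_nablaR_sdBr_vertical_snd (Y Z : H) (p : G × H) :
    ⟪(nablaR (sdBr brG brH b) adTP (0, Y) p).2, Z⟫ =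
      ⟪nablaR (brH · ·) adTH Y p.2, Z⟫ - ⟪p.1, secondFundForm h Y Z⟫ := by
  rw [real_inner_comm _ p.1, inner_secondFundForm hh]
  simp only [nablaR, sdBr, Prod.snd_add, Prod.snd_sub, Prod.smul_snd, inner_add_left,
    inner_sub_left, real_inner_smul_left, inner_sdBr_transpose_snd hadTP, hadTH, map_zero,
    LinearMap.zero_apply, inner_zero_right, inner_zero_left, real_inner_comm (b p.1 Z)]
  ring

theorem nablaR_sdBr_vertical_vertical (Y Z : H) :
    nablaR (sdBr brG brH b) adTP (0, Y) (0, Z) =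
      (secondFundForm h Y Z, nablaR (brH · ·) adTH Y Z) := by
  refine Prod.ext (nablaR_sdBr_vertical_vertical_fst hadTP hh Y Z) (ext_inner_right ℝ fun W => ?_)
  rw [inner_nablaR_sdBr_vertical_snd hadTP hh hadTH, inner_zero_left, sub_zero]

theorem semidirect_gauss_equation (Y₁ Y₂ Y₃ Y₄ : H) :
    ⟪(curvR (sdBr brG brH b) adTP (0, Y₁) (0, Y₂) (0, Y₃)).2, Y₄⟫ =
      ⟪curvR (brH · ·) adTH Y₁ Y₂ Y₃, Y₄⟫
        + ⟪secondFundForm h Y₁ Y₃, secondFundForm h Y₂ Y₄⟫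
        - ⟪secondFundForm h Y₂ Y₃, secondFundForm h Y₁ Y₄⟫ := by
  simp only [curvR, sdBr_vertical_vertical, nablaR_sdBr_vertical_vertical hadTP hh hadTH,
    Prod.snd_add, Prod.snd_sub, inner_add_left, inner_sub_left,
    inner_nablaR_sdBr_vertical_snd hadTP hh hadTH]
  ring

end Semidirect

theorem semidirect_curvature_vertical_general
    {G H : Type*}
    [NormedAddCommGroup G] [InnerProductSpace ℝ G] [NormedAddCommGroup H] [InnerProductSpace ℝ H]
    (brG : G →ₗ[ℝ] G →ₗ[ℝ] G) (brH : H →ₗ[ℝ] H →ₗ[ℝ] H) (b : G →ₗ[ℝ] H →ₗ[ℝ] H)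
    (h : H → H → G)
    (hh : ∀ (Y₁ Y₂ : H) (X : G), ⟪h Y₁ Y₂, X⟫ = ⟪b X Y₁, Y₂⟫)
    (adTH : H → H → H) (hadTH : ∀ X Y Z : H, ⟪adTH X Y, Z⟫ = ⟪Y, brH X Z⟫)
    (adTP : G × H → G × H → G × H)
    (hadTP : ∀ p q r : G × H,
      ⟪(adTP p q).1, r.1⟫ + ⟪(adTP p q).2, r.2⟫ =
        ⟪q.1, (sdBr brG brH b p r).1⟫ + ⟪q.2, (sdBr brG brH b p r).2⟫)
    (Y₁ Y₂ : H) :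
    ⟪(curvR (sdBr brG brH b) adTP (0, Y₁) (0, Y₂) (0, Y₂)).1, (0 : G)⟫
      + ⟪(curvR (sdBr brG brH b) adTP (0, Y₁) (0, Y₂) (0, Y₂)).2, Y₁⟫ =
      ⟪curvR (brH · ·) adTH Y₁ Y₂ Y₂, Y₁⟫
        + (1 / 4 : ℝ) * ‖h Y₁ Y₂ + h Y₂ Y₁‖ ^ 2
        - ⟪h Y₁ Y₁, h Y₂ Y₂⟫ := by
  rw [inner_zero_right, zero_add, semidirect_gauss_equation hadTP hh hadTH,
    secondFundForm_comm h Y₂ Y₁, inner_secondFundForm_self, secondFundForm_self,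
    secondFundForm_self, inner_neg_neg, real_inner_comm (h Y₁ Y₁)]

/-- The sectional curvature numerator of a plane spanned by `(0,Y₁)` and `(0,Y₂)`
in the semidirect product:
`⟨R^H(Y₁,Y₂)Y₂,Y₁⟩ + (1/4)‖h(Y₁,Y₂)+h(Y₂,Y₁)‖² − ⟨h(Y₁,Y₁),h(Y₂,Y₂)⟩`. -/
theorem semidirect_curvature_vertical
    {G H : Type*}
    [NormedAddCommGroup G] [InnerProductSpace ℝ G] [FiniteDimensional ℝ G]
    [NormedAddCommGroup H] [InnerProductSpace ℝ H] [FiniteDimensional ℝ H]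
    (brG : G →ₗ[ℝ] G →ₗ[ℝ] G) (brH : H →ₗ[ℝ] H →ₗ[ℝ] H)
    (hGalt : ∀ X : G, brG X X = 0)
    (hGjac : ∀ X Y Z : G, brG X (brG Y Z) + brG Y (brG Z X) + brG Z (brG X Y) = 0)
    (hHalt : ∀ Y : H, brH Y Y = 0)
    (hHjac : ∀ X Y Z : H, brH X (brH Y Z) + brH Y (brH Z X) + brH Z (brH X Y) = 0)
    (b : G →ₗ[ℝ] H →ₗ[ℝ] H)
    (hbhom : ∀ X₁ X₂ : G, b (brG X₁ X₂) = b X₁ ∘ₗ b X₂ - b X₂ ∘ₗ b X₁)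
    (hbder : ∀ (X : G) (Y₁ Y₂ : H), b X (brH Y₁ Y₂) = brH (b X Y₁) Y₂ + brH Y₁ (b X Y₂))
    (h : H → H → G)
    (hh : ∀ (Y₁ Y₂ : H) (X : G), ⟪h Y₁ Y₂, X⟫ = ⟪b X Y₁, Y₂⟫)
    (adTP : G × H → G × H → G × H)
    (hadTP : ∀ p q r : G × H,
      ⟪(adTP p q).1, r.1⟫ + ⟪(adTP p q).2, r.2⟫ =
        ⟪q.1, (sdBr brG brH b p r).1⟫ + ⟪q.2, (sdBr brG brH b p r).2⟫)
    (Y₁ Y₂ : H) :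
    ⟪(curvR (sdBr brG brH b) adTP ((0 : G), Y₁) ((0 : G), Y₂) ((0 : G), Y₂)).1, (0 : G)⟫
      + ⟪(curvR (sdBr brG brH b) adTP ((0 : G), Y₁) ((0 : G), Y₂) ((0 : G), Y₂)).2, Y₁⟫ =
      ⟪curvR (fun a c => brH a c) (fun a c => LinearMap.adjoint (brH a) c) Y₁ Y₂ Y₂, Y₁⟫
        + (1 / 4 : ℝ) * ‖h Y₁ Y₂ + h Y₂ Y₁‖ ^ 2
        - ⟪h Y₁ Y₁, h Y₂ Y₂⟫ :=
  semidirect_curvature_vertical_general brG brH b h hh _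
    (fun X Y Z => LinearMap.adjoint_inner_left (brH X) Z Y) adTP hadTP Y₁ Y₂
end
end

section
/- Let 𝔤 ⋉ 𝔥 be the semidirect product of two finite-dimensional real Lie algebras with inner products, with action b such that each b(X) is skew-adjoint (the isometric case). Then a differentiable curve (u,α) : ℝ → 𝔤 × 𝔥 satisfies the geodesic equation (u,α)' = −ad(u,α)ᵀ(u,α) of the right-invariant metric on 𝔤 ⋉ 𝔥 if and only if u'(t) = −ad(u(t))ᵀu(t) and α'(t) = −ad(α(t))ᵀα(t) + b(u(t))α(t) for all t. -/
open scoped RealInnerProductSpace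

noncomputable section

theorem prod_ext_inner_add_inner (𝕜 : Type*) {E F : Type*} [RCLike 𝕜]
    [NormedAddCommGroup E] [InnerProductSpace 𝕜 E]
    [NormedAddCommGroup F] [InnerProductSpace 𝕜 F] {p q : E × F}
    (h : ∀ r : E × F, inner 𝕜 p.1 r.1 + inner 𝕜 p.2 r.2 = inner 𝕜 q.1 r.1 + inner 𝕜 q.2 r.2) :
    p = q := by
  apply WithLp.toLp_injective 2
  refine ext_inner_right 𝕜 fun r => ?_
  simpa only [WithLp.prod_inner_apply] using h r.ofLp

section

variable {G H : Type*} [NormedAddCommGroup G] [InnerProductSpace ℝ G]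
  [NormedAddCommGroup H] [InnerProductSpace ℝ H]

theorem inner_self_apply_eq_zero_of_skew {T : H → H}
    (hT : ∀ x y : H, ⟪T x, y⟫ + ⟪x, T y⟫ = 0) (x : H) : ⟪x, T x⟫ = 0 := by
  have h := hT x x
  rw [real_inner_comm] at h
  linarith

variable (brG : G →ₗ[ℝ] G →ₗ[ℝ] G) (brH : H →ₗ[ℝ] H →ₗ[ℝ] H) (b : G →ₗ[ℝ] H →ₗ[ℝ] H)

theorem inner_add_inner_sdBr (p q r : G × H) :
    ⟪q.1, (sdBr brG brH b p r).1⟫ + ⟪q.2, (sdBr brG brH b p r).2⟫ =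
      (⟪q.1, brG p.1 r.1⟫ - ⟪q.2, b r.1 p.2⟫) + (⟪q.2, brH p.2 r.2⟫ + ⟪q.2, b p.1 r.2⟫) := by
  simp only [sdBr, inner_sub_right, inner_add_right]
  ring

/- Skewness kills the term `⟪p.2, b r.1 p.2⟫`, through which the `H`-component would otherwise
enter the equation for the `G`-component. -/
theorem inner_add_inner_sdBr_self_of_skew
    (hskew : ∀ (X : G) (Y₁ Y₂ : H), ⟪b X Y₁, Y₂⟫ + ⟪Y₁, b X Y₂⟫ = 0)
    (p r : G × H) :
    ⟪p.1, (sdBr brG brH b p r).1⟫ + ⟪p.2, (sdBr brG brH b p r).2⟫ =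
      ⟪p.1, brG p.1 r.1⟫ + (⟪p.2, brH p.2 r.2⟫ - ⟪b p.1 p.2, r.2⟫) := by
  rw [inner_add_inner_sdBr, inner_self_apply_eq_zero_of_skew (hskew r.1) p.2,
    eq_neg_of_add_eq_zero_right (hskew p.1 p.2 r.2), sub_zero, ← sub_eq_add_neg]

theorem adTranspose_sdBr_self_of_skew
    (hskew : ∀ (X : G) (Y₁ Y₂ : H), ⟪b X Y₁, Y₂⟫ + ⟪Y₁, b X Y₂⟫ = 0)
    (adTG : G → G → G) (hadTG : ∀ X Y Z : G, ⟪adTG X Y, Z⟫ = ⟪Y, brG X Z⟫)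
    (adTH : H → H → H) (hadTH : ∀ X Y Z : H, ⟪adTH X Y, Z⟫ = ⟪Y, brH X Z⟫)
    (adTP : G × H → G × H → G × H)
    (hadTP : ∀ p q r : G × H,
      ⟪(adTP p q).1, r.1⟫ + ⟪(adTP p q).2, r.2⟫ =
        ⟪q.1, (sdBr brG brH b p r).1⟫ + ⟪q.2, (sdBr brG brH b p r).2⟫)
    (p : G × H) :
    adTP p p = (adTG p.1 p.1, adTH p.2 p.2 - b p.1 p.2) := by
  refine prod_ext_inner_add_inner ℝ fun r => ?_
  rw [hadTP, inner_add_inner_sdBr_self_of_skew brG brH b hskew, inner_sub_left, hadTG, hadTH]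

theorem semidirect_geodesic_equation_isometric_general
    (hskew : ∀ (X : G) (Y₁ Y₂ : H), ⟪b X Y₁, Y₂⟫ + ⟪Y₁, b X Y₂⟫ = 0)
    (adTG : G → G → G) (hadTG : ∀ X Y Z : G, ⟪adTG X Y, Z⟫ = ⟪Y, brG X Z⟫)
    (adTH : H → H → H) (hadTH : ∀ X Y Z : H, ⟪adTH X Y, Z⟫ = ⟪Y, brH X Z⟫)
    (adTP : G × H → G × H → G × H)
    (hadTP : ∀ p q r : G × H,
      ⟪(adTP p q).1, r.1⟫ + ⟪(adTP p q).2, r.2⟫ =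
        ⟪q.1, (sdBr brG brH b p r).1⟫ + ⟪q.2, (sdBr brG brH b p r).2⟫)
    {u : ℝ → G} {α : ℝ → H} (hu : Differentiable ℝ u) (hα : Differentiable ℝ α) :
    (∀ t : ℝ, deriv (fun s => (u s, α s)) t = - adTP (u t, α t) (u t, α t)) ↔
      ((∀ t : ℝ, deriv u t = - adTG (u t) (u t)) ∧
        (∀ t : ℝ, deriv α t = - adTH (α t) (α t) + b (u t) (α t))) := by
  rw [← forall_and]
  refine forall_congr' fun t => ?_
  have deriv_pair : deriv (fun s => (u s, α s)) t = (deriv u t, deriv α t) :=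
    ((hu t).hasDerivAt.prodMk (hα t).hasDerivAt).deriv
  rw [deriv_pair,
    adTranspose_sdBr_self_of_skew brG brH b hskew adTG hadTG adTH hadTH adTP hadTP,
    Prod.neg_mk, Prod.mk.injEq, neg_sub', sub_neg_eq_add]

end

/-- Geodesic equation on an isometric semidirect product `𝔤 ⋉ 𝔥`:
`u_t = −ad(u)ᵀu`, `α_t = −ad(α)ᵀα + b(u)α`. -/
theorem semidirect_geodesic_equation_isometric
    {G H : Type*}
    [NormedAddCommGroup G] [InnerProductSpace ℝ G] [FiniteDimensional ℝ G]
    [NormedAddCommGroup H] [InnerProductSpace ℝ H] [FiniteDimensional ℝ H]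
    (brG : G →ₗ[ℝ] G →ₗ[ℝ] G) (brH : H →ₗ[ℝ] H →ₗ[ℝ] H)
    (hGalt : ∀ X : G, brG X X = 0)
    (hGjac : ∀ X Y Z : G, brG X (brG Y Z) + brG Y (brG Z X) + brG Z (brG X Y) = 0)
    (hHalt : ∀ Y : H, brH Y Y = 0)
    (hHjac : ∀ X Y Z : H, brH X (brH Y Z) + brH Y (brH Z X) + brH Z (brH X Y) = 0)
    (b : G →ₗ[ℝ] H →ₗ[ℝ] H)
    (hbhom : ∀ X₁ X₂ : G, b (brG X₁ X₂) = b X₁ ∘ₗ b X₂ - b X₂ ∘ₗ b X₁)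
    (hbder : ∀ (X : G) (Y₁ Y₂ : H), b X (brH Y₁ Y₂) = brH (b X Y₁) Y₂ + brH Y₁ (b X Y₂))
    (hskew : ∀ (X : G) (Y₁ Y₂ : H), ⟪b X Y₁, Y₂⟫ + ⟪Y₁, b X Y₂⟫ = 0)
    (adTP : G × H → G × H → G × H)
    (hadTP : ∀ p q r : G × H,
      ⟪(adTP p q).1, r.1⟫ + ⟪(adTP p q).2, r.2⟫ =
        ⟪q.1, (sdBr brG brH b p r).1⟫ + ⟪q.2, (sdBr brG brH b p r).2⟫)
    (u : ℝ → G) (α : ℝ → H) (hu : Differentiable ℝ u) (hα : Differentiable ℝ α) :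
    (∀ t : ℝ, deriv (fun s => (u s, α s)) t = - adTP (u t, α t) (u t, α t)) ↔
      ((∀ t : ℝ, deriv u t = - LinearMap.adjoint (brG (u t)) (u t)) ∧
        (∀ t : ℝ, deriv α t = - LinearMap.adjoint (brH (α t)) (α t) + b (u t) (α t))) := by
  exact semidirect_geodesic_equation_isometric_general brG brH b hskew
    (fun X => LinearMap.adjoint (brG X)) (fun X Y Z => LinearMap.adjoint_inner_left (brG X) Z Y)
    (fun X => LinearMap.adjoint (brH X)) (fun X Y Z => LinearMap.adjoint_inner_left (brH X) Z Y)
    adTP hadTP hu hα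
end
end

section
/- Let 𝔤 ⋉ 𝔥 be the semidirect product of two finite-dimensional real Lie algebras with inner products, with action b such that each b(X) is skew-adjoint (the isometric case), and let R̃, R^G, R^H denote the curvatures of the right-invariant metrics on 𝔤 ⋉ 𝔥, 𝔤, 𝔥 respectively. Then for all X₁,X₂ ∈ 𝔤 and Y₁,Y₂ ∈ 𝔥: ⟨R̃((X₁,Y₁),(X₂,Y₂))(X₂,Y₂),(X₁,Y₁)⟩ = ⟨R^G(X₁,X₂)X₂,X₁⟩ + ⟨R^H(Y₁,Y₂)Y₂,Y₁⟩. -/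
open scoped RealInnerProductSpace

noncomputable section

/-!
The Koszul formula shows that, when every `b X` is skew-adjoint, the covariant derivative of the
semidirect product is `∇_(X₁,Y₁) (X₂,Y₂) = (∇_X₁ X₂, ∇_Y₁ Y₂ - b(X₁) Y₂)`. A skew-adjoint
derivation of `𝔥` is also a derivation of `∇`, and this makes every mixed term of the curvature
cancel, the remaining `[b X₁, b X₂] - b [X₁, X₂]` being zero. Hence the whole curvature tensor, for
any nondegenerate metrics, is the product of those of the factors.
-/

section Koszul

variable {L : Type*} [AddCommGroup L] [Module ℝ L] {B : L →ₗ[ℝ] L →ₗ[ℝ] ℝ}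

theorem eq_of_separatingLeft (hB : B.SeparatingLeft) {x y : L} (h : ∀ z, B x z = B y z) : x = y :=
  LinearMap.ker_eq_bot.mp (LinearMap.separatingLeft_iff_ker_eq_bot.mp hB) (LinearMap.ext h)

theorem nablaR_koszul {br adT : L → L → L} (hadT : ∀ X, B.IsAdjointPair B (adT X) (br X))
    (X Y Z : L) :
    B (nablaR br adT X Y) Z = (1 / 2) * (B Y (br X Z) + B X (br Y Z) - B (br X Y) Z) := by
  simp only [nablaR, map_add, map_sub, map_smul, LinearMap.add_apply, LinearMap.sub_apply,
    LinearMap.smul_apply, smul_eq_mul, hadT X Y Z, hadT Y X Z]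
  ring

theorem nablaR_leibniz_of_isSkewAdjoint {br adT : L → L → L} (hB : B.SeparatingLeft)
    (hadT : ∀ X, B.IsAdjointPair B (adT X) (br X)) {D : L → L} (hD : B.IsSkewAdjoint D)
    (hder : ∀ X Y, D (br X Y) = br (D X) Y + br X (D Y)) (X Y : L) :
    D (nablaR br adT X Y) = nablaR br adT (D X) Y + nablaR br adT X (D Y) := by
  have skew (U V : L) : B (D U) V = -B U (D V) := by
    rw [hD U V, Pi.neg_apply, map_neg]
  refine eq_of_separatingLeft hB fun Z => ?_
  have bracket_term : B (br X Y) (D Z) = -(B (br (D X) Y) Z + B (br X (D Y)) Z) := by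
    rw [← LinearMap.add_apply, ← map_add, ← hder, skew, neg_neg]
  simp only [skew, nablaR_koszul hadT, map_add, LinearMap.add_apply, bracket_term, hder]
  ring

section Bilinear

variable {br : L →ₗ[ℝ] L →ₗ[ℝ] L} {adT : L → L → L}

theorem nablaR_add_left (hB : B.SeparatingLeft) (hadT : ∀ X, B.IsAdjointPair B (adT X) (br X))
    (X X' Y : L) :
    nablaR (fun U V => br U V) adT (X + X') Y =
      nablaR (fun U V => br U V) adT X Y + nablaR (fun U V => br U V) adT X' Y := by
  refine eq_of_separatingLeft hB fun Z => ?_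
  simp only [nablaR_koszul hadT, map_add, LinearMap.add_apply]
  ring

theorem nablaR_sub_left (hB : B.SeparatingLeft) (hadT : ∀ X, B.IsAdjointPair B (adT X) (br X))
    (X X' Y : L) :
    nablaR (fun U V => br U V) adT (X - X') Y =
      nablaR (fun U V => br U V) adT X Y - nablaR (fun U V => br U V) adT X' Y := by
  rw [eq_sub_iff_add_eq, ← nablaR_add_left hB hadT, sub_add_cancel]

theorem nablaR_sub_right (hB : B.SeparatingLeft) (hadT : ∀ X, B.IsAdjointPair B (adT X) (br X))
    (X Y Y' : L) :
    nablaR (fun U V => br U V) adT X (Y - Y') =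
      nablaR (fun U V => br U V) adT X Y - nablaR (fun U V => br U V) adT X Y' := by
  refine eq_of_separatingLeft hB fun Z => ?_
  simp only [nablaR_koszul hadT, map_sub, LinearMap.sub_apply]
  ring

end Bilinear

end Koszul

section Semidirect

variable {G H : Type*} [AddCommGroup G] [Module ℝ G] [AddCommGroup H] [Module ℝ H]

/-- The orthogonal sum of two bilinear forms, giving the metric of the semidirect product. It is
used instead of an inner product on `G × H`, whose norm in Mathlib is the supremum norm. -/
def prodForm (BG : G →ₗ[ℝ] G →ₗ[ℝ] ℝ) (BH : H →ₗ[ℝ] H →ₗ[ℝ] ℝ) :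
    G × H →ₗ[ℝ] G × H →ₗ[ℝ] ℝ :=
  BG.compl₁₂ (.fst ℝ G H) (.fst ℝ G H) + BH.compl₁₂ (.snd ℝ G H) (.snd ℝ G H)

variable {BG : G →ₗ[ℝ] G →ₗ[ℝ] ℝ} {BH : H →ₗ[ℝ] H →ₗ[ℝ] ℝ}

theorem prodForm_apply (p q : G × H) : prodForm BG BH p q = BG p.1 q.1 + BH p.2 q.2 :=
  rfl

theorem separatingLeft_prodForm (hBG : BG.SeparatingLeft) (hBH : BH.SeparatingLeft) :
    (prodForm BG BH).SeparatingLeft := by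
  refine fun p hp => Prod.ext (hBG _ fun X => ?_) (hBH _ fun Y => ?_)
  · simpa [prodForm_apply] using hp (X, 0)
  · simpa [prodForm_apply] using hp (0, Y)

variable {brG : G →ₗ[ℝ] G →ₗ[ℝ] G} {brH : H →ₗ[ℝ] H →ₗ[ℝ] H} {b : G →ₗ[ℝ] H →ₗ[ℝ] H}
  {adTG : G → G → G} {adTH : H → H → H} {adTP : G × H → G × H → G × H}

theorem nablaR_sdBr (hBG : BG.SeparatingLeft) (hBH : BH.SeparatingLeft) (hBHsymm : BH.IsSymm)
    (hadTG : ∀ X, BG.IsAdjointPair BG (adTG X) (brG X))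
    (hadTH : ∀ Y, BH.IsAdjointPair BH (adTH Y) (brH Y))
    (hadTP : ∀ p, (prodForm BG BH).IsAdjointPair (prodForm BG BH) (adTP p) (sdBr brG brH b p))
    (hskew : ∀ X, BH.IsSkewAdjoint (b X)) (p q : G × H) :
    nablaR (sdBr brG brH b) adTP p q =
      (nablaR (fun U V => brG U V) adTG p.1 q.1,
        nablaR (fun U V => brH U V) adTH p.2 q.2 - b p.1 q.2) := by
  have skew (X : G) (U V : H) : BH U (b X V) = -BH (b X U) V := by
    rw [hskew X U V, Pi.neg_apply, map_neg, neg_neg]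
  have skew_swap (X : G) : BH (b X q.2) p.2 = -BH (b X p.2) q.2 := by
    rw [← skew, ← hBHsymm.eq (b X q.2), RingHom.id_apply]
  refine eq_of_separatingLeft (separatingLeft_prodForm hBG hBH) fun r => ?_
  simp only [nablaR_koszul hadTP, prodForm_apply, nablaR_koszul hadTG, nablaR_koszul hadTH, sdBr,
    map_add, map_sub, LinearMap.add_apply, LinearMap.sub_apply, skew, skew_swap]
  ring

theorem semidirect_curvature_isometric_general (hBG : BG.SeparatingLeft) (hBH : BH.SeparatingLeft)
    (hBHsymm : BH.IsSymm)
    (hbhom : ∀ X₁ X₂ : G, b (brG X₁ X₂) = b X₁ ∘ₗ b X₂ - b X₂ ∘ₗ b X₁)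
    (hbder : ∀ (X : G) (Y₁ Y₂ : H), b X (brH Y₁ Y₂) = brH (b X Y₁) Y₂ + brH Y₁ (b X Y₂))
    (hskew : ∀ X, BH.IsSkewAdjoint (b X))
    (hadTG : ∀ X, BG.IsAdjointPair BG (adTG X) (brG X))
    (hadTH : ∀ Y, BH.IsAdjointPair BH (adTH Y) (brH Y))
    (hadTP : ∀ p, (prodForm BG BH).IsAdjointPair (prodForm BG BH) (adTP p) (sdBr brG brH b p))
    (p q r : G × H) :
    curvR (sdBr brG brH b) adTP p q r =
      (curvR (fun U V => brG U V) adTG p.1 q.1 r.1,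
        curvR (fun U V => brH U V) adTH p.2 q.2 r.2) := by
  have b_nabla (X : G) :=
    nablaR_leibniz_of_isSkewAdjoint (br := fun U V => brH U V) hBH hadTH (hskew X) (hbder X)
  simp only [curvR, nablaR_sdBr hBG hBH hBHsymm hadTG hadTH hadTP hskew]
  refine Prod.ext rfl ?_
  simp only [sdBr, Prod.snd_add, Prod.snd_sub, nablaR_add_left hBH hadTH,
    nablaR_sub_left hBH hadTH, nablaR_sub_right hBH hadTH, map_sub, b_nabla, hbhom,
    LinearMap.sub_apply, LinearMap.comp_apply]
  abel

end Semidirect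

theorem separatingLeft_innerₗ (E : Type*) [NormedAddCommGroup E] [InnerProductSpace ℝ E] :
    (innerₗ E).SeparatingLeft :=
  fun x hx => inner_self_eq_zero.mp (hx x)

/-- In the isometric case the curvature of the semidirect product is the sum of
the curvatures of the two factors (Proposition 4 of the paper). -/
theorem semidirect_curvature_isometric
    {G H : Type*}
    [NormedAddCommGroup G] [InnerProductSpace ℝ G] [FiniteDimensional ℝ G]
    [NormedAddCommGroup H] [InnerProductSpace ℝ H] [FiniteDimensional ℝ H]
    (brG : G →ₗ[ℝ] G →ₗ[ℝ] G) (brH : H →ₗ[ℝ] H →ₗ[ℝ] H)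
    (hGalt : ∀ X : G, brG X X = 0)
    (hGjac : ∀ X Y Z : G, brG X (brG Y Z) + brG Y (brG Z X) + brG Z (brG X Y) = 0)
    (hHalt : ∀ Y : H, brH Y Y = 0)
    (hHjac : ∀ X Y Z : H, brH X (brH Y Z) + brH Y (brH Z X) + brH Z (brH X Y) = 0)
    (b : G →ₗ[ℝ] H →ₗ[ℝ] H)
    (hbhom : ∀ X₁ X₂ : G, b (brG X₁ X₂) = b X₁ ∘ₗ b X₂ - b X₂ ∘ₗ b X₁)
    (hbder : ∀ (X : G) (Y₁ Y₂ : H), b X (brH Y₁ Y₂) = brH (b X Y₁) Y₂ + brH Y₁ (b X Y₂))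
    (hskew : ∀ (X : G) (Y₁ Y₂ : H), ⟪b X Y₁, Y₂⟫ + ⟪Y₁, b X Y₂⟫ = 0)
    (adTP : G × H → G × H → G × H)
    (hadTP : ∀ p q r : G × H,
      ⟪(adTP p q).1, r.1⟫ + ⟪(adTP p q).2, r.2⟫ =
        ⟪q.1, (sdBr brG brH b p r).1⟫ + ⟪q.2, (sdBr brG brH b p r).2⟫)
    (X₁ X₂ : G) (Y₁ Y₂ : H) :
    ⟪(curvR (sdBr brG brH b) adTP (X₁, Y₁) (X₂, Y₂) (X₂, Y₂)).1, X₁⟫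
      + ⟪(curvR (sdBr brG brH b) adTP (X₁, Y₁) (X₂, Y₂) (X₂, Y₂)).2, Y₁⟫ =
      ⟪curvR (fun a c => brG a c) (fun a c => LinearMap.adjoint (brG a) c) X₁ X₂ X₂, X₁⟫
        + ⟪curvR (fun a c => brH a c) (fun a c => LinearMap.adjoint (brH a) c) Y₁ Y₂ Y₂, Y₁⟫ := by
  have skew (X : G) : (innerₗ H).IsSkewAdjoint (b X) := fun U V => by
    simpa [inner_neg_right] using eq_neg_of_add_eq_zero_left (hskew X U V)
  rw [semidirect_curvature_isometric_general (separatingLeft_innerₗ G) (separatingLeft_innerₗ H)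
    isSymm_inner hbhom hbder skew (fun X _ _ => LinearMap.adjoint_inner_left (brG X) _ _)
    (fun Y _ _ => LinearMap.adjoint_inner_left (brH Y) _ _) hadTP]
end
end

section
/- Let 𝔤 be a finite-dimensional real Lie algebra and V a finite-dimensional real inner product space, regarded as an abelian Lie algebra, with b : 𝔤 → End(V) a Lie algebra homomorphism (a representation of 𝔤 on V). A differentiable curve (u,v) : ℝ → 𝔤 × V satisfies the geodesic equation (u,v)' = −ad(u,v)ᵀ(u,v) of the right-invariant metric on the semidirect product 𝔤 ⋉ V if and only if u'(t) = −ad(u(t))ᵀu(t) + h(v(t),v(t)) and v'(t) = −b(u(t))ᵀv(t) for all t. -/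
open scoped RealInnerProductSpace

noncomputable section

section

variable {G V : Type*} [NormedAddCommGroup G] [InnerProductSpace ℝ G]
  [NormedAddCommGroup V] [InnerProductSpace ℝ V]

theorem prod_ext_inner_right {p q : G × V}
    (hpq : ∀ r : G × V, ⟪p.1, r.1⟫ + ⟪p.2, r.2⟫ = ⟪q.1, r.1⟫ + ⟪q.2, r.2⟫) : p = q :=
  WithLp.toLp_injective 2 <| ext_inner_right ℝ fun r => by
    simpa only [WithLp.prod_inner_apply] using hpq r.ofLp

variable {brG adT : G → G → G} {b bT : G → V → V} {h : V → V → G}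
  {adTP : G × V → G × V → G × V}

theorem semidirect_ad_transpose_apply
    (hadT : ∀ X Y Z : G, ⟪adT X Y, Z⟫ = ⟪Y, brG X Z⟫)
    (hbT : ∀ (X : G) (v w : V), ⟪bT X v, w⟫ = ⟪v, b X w⟫)
    (hh : ∀ (v₁ v₂ : V) (X : G), ⟪h v₁ v₂, X⟫ = ⟪b X v₁, v₂⟫)
    (hadTP : ∀ p q r : G × V,
      ⟪(adTP p q).1, r.1⟫ + ⟪(adTP p q).2, r.2⟫ =
        ⟪q.1, brG p.1 r.1⟫ + ⟪q.2, b p.1 r.2 - b r.1 p.2⟫)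
    (X Y : G) (v w : V) :
    adTP (X, v) (Y, w) = (adT X Y - h v w, bT X w) := by
  refine prod_ext_inner_right fun r => ?_
  calc ⟪(adTP (X, v) (Y, w)).1, r.1⟫ + ⟪(adTP (X, v) (Y, w)).2, r.2⟫
      = ⟪Y, brG X r.1⟫ + ⟪w, b X r.2 - b r.1 v⟫ := hadTP _ _ _
    _ = ⟪Y, brG X r.1⟫ - ⟪b r.1 v, w⟫ + ⟪w, b X r.2⟫ := by
      rw [inner_sub_right, real_inner_comm w (b r.1 v)]
      ring
    _ = ⟪adT X Y - h v w, r.1⟫ + ⟪bT X w, r.2⟫ := by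
      rw [inner_sub_left, hadT, hh, hbT]

theorem linear_action_geodesic_equation_general
    (hadT : ∀ X Y Z : G, ⟪adT X Y, Z⟫ = ⟪Y, brG X Z⟫)
    (hbT : ∀ (X : G) (v w : V), ⟪bT X v, w⟫ = ⟪v, b X w⟫)
    (hh : ∀ (v₁ v₂ : V) (X : G), ⟪h v₁ v₂, X⟫ = ⟪b X v₁, v₂⟫)
    (hadTP : ∀ p q r : G × V,
      ⟪(adTP p q).1, r.1⟫ + ⟪(adTP p q).2, r.2⟫ =
        ⟪q.1, brG p.1 r.1⟫ + ⟪q.2, b p.1 r.2 - b r.1 p.2⟫)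
    {u : ℝ → G} {v : ℝ → V} {t : ℝ}
    (hu : DifferentiableAt ℝ u t) (hv : DifferentiableAt ℝ v t) :
    deriv (fun s => (u s, v s)) t = - adTP (u t, v t) (u t, v t) ↔
      deriv u t = - adT (u t) (u t) + h (v t) (v t) ∧ deriv v t = - bT (u t) (v t) := by
  have deriv_pair : deriv (fun s => (u s, v s)) t = (deriv u t, deriv v t) :=
    (hu.hasDerivAt.prodMk hv.hasDerivAt).deriv
  rw [deriv_pair, semidirect_ad_transpose_apply hadT hbT hh hadTP, Prod.neg_mk, Prod.mk_inj,
    neg_sub, sub_eq_neg_add]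

end

/-- Geodesic equation for a linear action: on `𝔤 ⋉ V` (with `V` abelian),
`u_t = −ad(u)ᵀu + h(v,v)`, `v_t = −b(u)ᵀv`. -/
theorem linear_action_geodesic_equation
    {G V : Type*}
    [NormedAddCommGroup G] [InnerProductSpace ℝ G] [FiniteDimensional ℝ G]
    [NormedAddCommGroup V] [InnerProductSpace ℝ V] [FiniteDimensional ℝ V]
    (brG : G →ₗ[ℝ] G →ₗ[ℝ] G)
    (hGalt : ∀ X : G, brG X X = 0)
    (hGjac : ∀ X Y Z : G, brG X (brG Y Z) + brG Y (brG Z X) + brG Z (brG X Y) = 0)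
    (b : G →ₗ[ℝ] V →ₗ[ℝ] V)
    (hbhom : ∀ X₁ X₂ : G, b (brG X₁ X₂) = b X₁ ∘ₗ b X₂ - b X₂ ∘ₗ b X₁)
    (h : V → V → G)
    (hh : ∀ (v₁ v₂ : V) (X : G), ⟪h v₁ v₂, X⟫ = ⟪b X v₁, v₂⟫)
    (adTP : G × V → G × V → G × V)
    (hadTP : ∀ p q r : G × V,
      ⟪(adTP p q).1, r.1⟫ + ⟪(adTP p q).2, r.2⟫ =
        ⟪q.1, brG p.1 r.1⟫ + ⟪q.2, b p.1 r.2 - b r.1 p.2⟫)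
    (u : ℝ → G) (v : ℝ → V) (hu : Differentiable ℝ u) (hv : Differentiable ℝ v) :
    (∀ t : ℝ, deriv (fun s => (u s, v s)) t = - adTP (u t, v t) (u t, v t)) ↔
      ((∀ t : ℝ, deriv u t = - LinearMap.adjoint (brG (u t)) (u t) + h (v t) (v t)) ∧
        (∀ t : ℝ, deriv v t = - LinearMap.adjoint (b (u t)) (v t))) := by
  rw [← forall_and]
  exact forall_congr' fun t => linear_action_geodesic_equation_general
    (fun X Y Z => LinearMap.adjoint_inner_left (brG X) Z Y)
    (fun X v w => LinearMap.adjoint_inner_left (b X) w v) hh hadTP (hu t) (hv t)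
end
end

section
/- Let 𝔤 be a finite-dimensional real Lie algebra with an inner product, and consider the semidirect product 𝔤 ⋉ 𝔤 with action b(X) = ad(X) (conjugation). A differentiable curve (u,v) : ℝ → 𝔤 × 𝔤 satisfies the geodesic equation (u,v)' = −ad(u,v)ᵀ(u,v) of the right-invariant metric on 𝔤 ⋉ 𝔤 if and only if u'(t) = −ad(u(t))ᵀu(t) − ad(v(t))ᵀv(t) and v'(t) = −ad(v(t))ᵀv(t) − ad(u(t))ᵀv(t) for all t. -/
open scoped RealInnerProductSpace

noncomputable section

section Transpose

variable {𝕜 E F K : Type*} [RCLike 𝕜] [AddCommMonoid E] [Module 𝕜 E]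
  [NormedAddCommGroup F] [InnerProductSpace 𝕜 F] [NormedAddCommGroup K] [InnerProductSpace 𝕜 K]

/-- `bT x` is the transpose of the operator `b x` for every `x`. It is a relation rather than a
function of `b` because transposes need not exist when `F` is infinite-dimensional. -/
def IsTranspose (b : E →ₗ[𝕜] F →ₗ[𝕜] K) (bT : E → K → F) : Prop :=
  ∀ x z y, inner 𝕜 (bT x z) y = inner 𝕜 z (b x y)

theorem isTranspose_adjoint [FiniteDimensional 𝕜 F] [FiniteDimensional 𝕜 K]
    (b : E →ₗ[𝕜] F →ₗ[𝕜] K) : IsTranspose b fun x ↦ LinearMap.adjoint (b x) :=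
  fun x z y ↦ LinearMap.adjoint_inner_left (b x) y z

theorem IsTranspose.neg_flip_of_isAlt {br : F →ₗ[𝕜] F →ₗ[𝕜] F} {adT : F → F → F}
    (hT : IsTranspose br adT) (halt : br.IsAlt) : IsTranspose br.flip (-adT) := fun x z y ↦ by
  rw [Pi.neg_apply, Pi.neg_apply, inner_neg_left, hT, ← inner_neg_right, halt.neg,
    LinearMap.flip_apply]

end Transpose

section SemidirectTranspose

variable {𝕜 G H : Type*} [RCLike 𝕜] [NormedAddCommGroup G] [InnerProductSpace 𝕜 G]
  [NormedAddCommGroup H] [InnerProductSpace 𝕜 H]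

/-- `adT p` is the transpose of `ad p` on the semidirect product `G ⋉ H` defined by an action `b`
of `G` on `H`. The sum inner product is written out by components, since the type `G × H` carries
the supremum norm. -/
def IsSemidirectTranspose (brG : G →ₗ[𝕜] G →ₗ[𝕜] G) (brH : H →ₗ[𝕜] H →ₗ[𝕜] H)
    (b : G →ₗ[𝕜] H →ₗ[𝕜] H) (adT : G × H → G × H → G × H) : Prop :=
  ∀ p q r : G × H, inner 𝕜 (adT p q).1 r.1 + inner 𝕜 (adT p q).2 r.2 =
    inner 𝕜 q.1 (brG p.1 r.1) + inner 𝕜 q.2 (brH p.2 r.2 + b p.1 r.2 - b r.1 p.2)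

namespace IsSemidirectTranspose

variable {brG : G →ₗ[𝕜] G →ₗ[𝕜] G} {brH : H →ₗ[𝕜] H →ₗ[𝕜] H} {b : G →ₗ[𝕜] H →ₗ[𝕜] H}
  {adT : G × H → G × H → G × H} {adTG : G → G → G} {adTH : H → H → H}
  {bT : G → H → H} {bFlipT : H → H → G}

theorem fst_eq (hT : IsSemidirectTranspose brG brH b adT) (hG : IsTranspose brG adTG)
    (hflip : IsTranspose b.flip bFlipT) (p q : G × H) :
    (adT p q).1 = adTG p.1 q.1 - bFlipT p.2 q.2 := by
  refine ext_inner_right 𝕜 fun x ↦ ?_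
  calc inner 𝕜 (adT p q).1 x
      = inner 𝕜 q.1 (brG p.1 x) - inner 𝕜 q.2 (b x p.2) := by
        simpa [sub_eq_add_neg] using hT p q (x, 0)
    _ = inner 𝕜 (adTG p.1 q.1 - bFlipT p.2 q.2) x := by
        rw [inner_sub_left, hG, hflip, LinearMap.flip_apply]

theorem snd_eq (hT : IsSemidirectTranspose brG brH b adT) (hH : IsTranspose brH adTH)
    (hb : IsTranspose b bT) (p q : G × H) :
    (adT p q).2 = adTH p.2 q.2 + bT p.1 q.2 := by
  refine ext_inner_right 𝕜 fun y ↦ ?_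
  calc inner 𝕜 (adT p q).2 y
      = inner 𝕜 q.2 (brH p.2 y) + inner 𝕜 q.2 (b p.1 y) := by
        simpa [inner_add_right] using hT p q (0, y)
    _ = inner 𝕜 (adTH p.2 q.2 + bT p.1 q.2) y := by
        rw [inner_add_left, hH, hb]

end IsSemidirectTranspose

end SemidirectTranspose

theorem semidirect_geodesic_equation_s15 {G H : Type*} [NormedAddCommGroup G] [InnerProductSpace ℝ G]
    [NormedAddCommGroup H] [InnerProductSpace ℝ H] {brG : G →ₗ[ℝ] G →ₗ[ℝ] G}
    {brH : H →ₗ[ℝ] H →ₗ[ℝ] H} {b : G →ₗ[ℝ] H →ₗ[ℝ] H} {adT : G × H → G × H → G × H}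
    {adTG : G → G → G} {adTH : H → H → H} {bT : G → H → H} {bFlipT : H → H → G}
    (hT : IsSemidirectTranspose brG brH b adT) (hG : IsTranspose brG adTG)
    (hH : IsTranspose brH adTH) (hb : IsTranspose b bT) (hflip : IsTranspose b.flip bFlipT)
    {u : ℝ → G} {v : ℝ → H} (hu : Differentiable ℝ u) (hv : Differentiable ℝ v) :
    (∀ t, deriv (fun s ↦ (u s, v s)) t = -adT (u t, v t) (u t, v t)) ↔
      (∀ t, deriv u t = -adTG (u t) (u t) + bFlipT (v t) (v t)) ∧
        ∀ t, deriv v t = -adTH (v t) (v t) - bT (u t) (v t) := by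
  rw [← forall_and]
  refine forall_congr' fun t ↦ ?_
  have hderiv : deriv (fun s ↦ (u s, v s)) t = (deriv u t, deriv v t) :=
    ((hu t).hasDerivAt.prodMk (hv t).hasDerivAt).deriv
  rw [hderiv, Prod.ext_iff, Prod.fst_neg, Prod.snd_neg, hT.fst_eq hG hflip, hT.snd_eq hH hb,
    neg_sub', neg_add', sub_neg_eq_add]

theorem conjugation_geodesic_equation_general {G : Type*} [NormedAddCommGroup G]
    [InnerProductSpace ℝ G] {br : G →ₗ[ℝ] G →ₗ[ℝ] G} (halt : br.IsAlt)
    {adT : G → G → G} (hadT : IsTranspose br adT)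
    {adTP : G × G → G × G → G × G} (hadTP : IsSemidirectTranspose br br br adTP)
    {u v : ℝ → G} (hu : Differentiable ℝ u) (hv : Differentiable ℝ v) :
    (∀ t, deriv (fun s ↦ (u s, v s)) t = -adTP (u t, v t) (u t, v t)) ↔
      (∀ t, deriv u t = -adT (u t) (u t) - adT (v t) (v t)) ∧
        ∀ t, deriv v t = -adT (v t) (v t) - adT (u t) (v t) := by
  simpa only [Pi.neg_apply, ← sub_eq_add_neg] using
    semidirect_geodesic_equation_s15 hadTP hadT hadT hadT (hadT.neg_flip_of_isAlt halt) hu hv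

/-- Geodesic equation on the semidirect product `𝔤 ⋉ 𝔤` for the conjugation
action: `u_t = −ad(u)ᵀu − ad(v)ᵀv`, `v_t = −ad(v)ᵀv − ad(u)ᵀv`. -/
theorem conjugation_geodesic_equation
    {G : Type*} [NormedAddCommGroup G] [InnerProductSpace ℝ G] [FiniteDimensional ℝ G]
    (brG : G →ₗ[ℝ] G →ₗ[ℝ] G)
    (hGalt : ∀ X : G, brG X X = 0)
    (hGjac : ∀ X Y Z : G, brG X (brG Y Z) + brG Y (brG Z X) + brG Z (brG X Y) = 0)
    (adTP : G × G → G × G → G × G)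
    (hadTP : ∀ p q r : G × G,
      ⟪(adTP p q).1, r.1⟫ + ⟪(adTP p q).2, r.2⟫ =
        ⟪q.1, brG p.1 r.1⟫ + ⟪q.2, brG p.2 r.2 + brG p.1 r.2 - brG r.1 p.2⟫)
    (u v : ℝ → G) (hu : Differentiable ℝ u) (hv : Differentiable ℝ v) :
    (∀ t : ℝ, deriv (fun s => (u s, v s)) t = - adTP (u t, v t) (u t, v t)) ↔
      ((∀ t : ℝ, deriv u t =
          - LinearMap.adjoint (brG (u t)) (u t) - LinearMap.adjoint (brG (v t)) (v t)) ∧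
        (∀ t : ℝ, deriv v t =
          - LinearMap.adjoint (brG (v t)) (v t) - LinearMap.adjoint (brG (u t)) (v t))) :=
  conjugation_geodesic_equation_general hGalt (isTranspose_adjoint brG) hadTP hu hv
end
end

section
/- Let 𝔤 be a finite-dimensional real Lie algebra with an inner product and let 𝔤 ⋉ 𝔤* be its magnetic extension (semidirect product with the coadjoint action ad*, 𝔤* carrying the inner product transported via A). A differentiable pair of curves u, v : ℝ → 𝔤 is such that (u, A∘v) satisfies the geodesic equation (u,A∘v)' = −ad(u,A∘v)ᵀ(u,A∘v) of the right-invariant metric on 𝔤 ⋉ 𝔤* if and only if u'(t) = −ad(u(t))ᵀu(t) + ad(v(t))ᵀv(t) and v'(t) = [u(t),v(t)] for all t. -/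
open scoped RealInnerProductSpace

noncomputable section

/-!
Identify `𝔤*` with `𝔤` through the Riesz isomorphism `A`. Then `ad*(X)` becomes `-ad(X)ᵀ`, and
moving every bracket in `⟨q, [p, r]⟩` off `r`, with one use of `[R, W] = -[W, R]`, gives
`ad(X, A V)ᵀ (Y, A W) = (ad(X)ᵀ Y - ad(W)ᵀ V, -A [X, W])`.
The geodesic equation is the case `X = Y = u`, `V = W = v`, read componentwise.
-/

theorem deriv_prodMk_clm_apply {𝕜 E F H : Type*} [NontriviallyNormedField 𝕜]
    [NormedAddCommGroup E] [NormedSpace 𝕜 E] [NormedAddCommGroup F] [NormedSpace 𝕜 F]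
    [NormedAddCommGroup H] [NormedSpace 𝕜 H] (L : F →L[𝕜] H) {u : 𝕜 → E} {v : 𝕜 → F} {t : 𝕜}
    (hu : DifferentiableAt 𝕜 u t) (hv : DifferentiableAt 𝕜 v t) :
    deriv (fun s => (u s, L (v s))) t = (deriv u t, L (deriv v t)) :=
  (hu.hasDerivAt.prodMk (L.hasFDerivAt.comp_hasDerivAt t hv.hasDerivAt)).deriv

section MagneticExtension

variable {G : Type*} [NormedAddCommGroup G] [InnerProductSpace ℝ G]

/-- The coadjoint action `ad*(X) a = -a ∘ [X, ·]` of an algebra with bracket `br` on its dual. -/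
def coadjoint (br : G →ₗ[ℝ] G →L[ℝ] G) (X : G) (a : StrongDual ℝ G) : StrongDual ℝ G :=
  -(a ∘L br X)

/-- The bracket of the magnetic extension `𝔤 ⋉ 𝔤*`, the semidirect product of `𝔤` with its dual
under the coadjoint action. -/
def magneticBracket (br : G →ₗ[ℝ] G →L[ℝ] G) (p q : G × StrongDual ℝ G) : G × StrongDual ℝ G :=
  (br p.1 q.1, coadjoint br p.1 q.2 - coadjoint br q.1 p.2)

variable [CompleteSpace G]

/-- The Riesz isomorphism `X ↦ ⟨X, ·⟩`. This is `InnerProductSpace.toDual ℝ G` typed as an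
`ℝ`-linear rather than a conjugate-linear map. -/
def riesz : G ≃ₗᵢ[ℝ] StrongDual ℝ G :=
  InnerProductSpace.toDual ℝ G

theorem riesz_symm_inner (a : StrongDual ℝ G) (X : G) : ⟪riesz.symm a, X⟫ = a X :=
  InnerProductSpace.toDual_symm_apply

theorem eq_riesz_of_apply_eq_inner {A : G ≃ₗ[ℝ] StrongDual ℝ G}
    (hA : ∀ X Y : G, A X Y = ⟪X, Y⟫) : A = riesz.toLinearEquiv :=
  LinearEquiv.ext fun X => ContinuousLinearMap.ext fun Y => hA X Y

/-- The inner product of the magnetic extension `𝔤 ⋉ 𝔤*`, where `𝔤*` carries the inner product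
transported from `𝔤` by the Riesz isomorphism. It is a plain function because `G × StrongDual ℝ G`
has the sup norm. -/
def magneticInner (p q : G × StrongDual ℝ G) : ℝ :=
  ⟪p.1, q.1⟫ + ⟪riesz.symm p.2, riesz.symm q.2⟫

theorem ext_magneticInner_right {p q : G × StrongDual ℝ G}
    (h : ∀ r, magneticInner p r = magneticInner q r) : p = q := by
  refine Prod.ext (ext_inner_right ℝ fun X => ?_)
    (riesz.symm.injective (ext_inner_right ℝ fun X => ?_))
  · simpa [magneticInner] using h (X, 0)
  · simpa [magneticInner] using h (0, riesz X)

theorem riesz_symm_coadjoint (br : G →ₗ[ℝ] G →L[ℝ] G) (X : G) (a : StrongDual ℝ G) :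
    riesz.symm (coadjoint br X a) = -(br X).adjoint (riesz.symm a) := by
  refine ext_inner_right ℝ fun Z => ?_
  rw [riesz_symm_inner, inner_neg_left, ContinuousLinearMap.adjoint_inner_left, riesz_symm_inner]
  rfl

/-- The transpose `q ↦ ad(p)ᵀ q` of the adjoint representation of the magnetic extension, in closed
form. -/
def magneticAdTranspose (br : G →ₗ[ℝ] G →L[ℝ] G) (p q : G × StrongDual ℝ G) :
    G × StrongDual ℝ G :=
  ((br p.1).adjoint q.1 - (br (riesz.symm q.2)).adjoint (riesz.symm p.2),
    -riesz (br p.1 (riesz.symm q.2)))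

theorem inner_adjoint_swap_of_alternating {br : G →ₗ[ℝ] G →L[ℝ] G} (hbr : ∀ X, br X X = 0)
    (W R V : G) : ⟪W, (br R).adjoint V⟫ = -⟪(br W).adjoint V, R⟫ := by
  have hskew : -br W R = br R W :=
    LinearMap.IsAlt.neg (B := ContinuousLinearMap.coeLM ℝ ∘ₗ br) hbr W R
  rw [ContinuousLinearMap.adjoint_inner_right, ← hskew, inner_neg_left,
    ContinuousLinearMap.adjoint_inner_left, real_inner_comm]

theorem magneticInner_magneticAdTranspose {br : G →ₗ[ℝ] G →L[ℝ] G} (hbr : ∀ X, br X X = 0)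
    (p q r : G × StrongDual ℝ G) :
    magneticInner (magneticAdTranspose br p q) r = magneticInner q (magneticBracket br p r) := by
  obtain ⟨X, a⟩ := p
  obtain ⟨Y, b⟩ := q
  obtain ⟨R, c⟩ := r
  have hdual : ⟪riesz.symm b, riesz.symm (coadjoint br X c - coadjoint br R a)⟫ =
      -⟪br X (riesz.symm b), riesz.symm c⟫ -
        ⟪(br (riesz.symm b)).adjoint (riesz.symm a), R⟫ := by
    rw [map_sub, riesz_symm_coadjoint, riesz_symm_coadjoint, inner_sub_right, inner_neg_right,
      inner_neg_right, ContinuousLinearMap.adjoint_inner_right,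
      inner_adjoint_swap_of_alternating hbr, neg_neg]
  simp only [magneticInner, magneticAdTranspose, magneticBracket, hdual, inner_sub_left,
    ContinuousLinearMap.adjoint_inner_left, map_neg, LinearIsometryEquiv.symm_apply_apply,
    inner_neg_left]
  ring

theorem eq_magneticAdTranspose {br : G →ₗ[ℝ] G →L[ℝ] G} (hbr : ∀ X, br X X = 0)
    {adT : G × StrongDual ℝ G → G × StrongDual ℝ G → G × StrongDual ℝ G}
    (hadT : ∀ p q r, magneticInner (adT p q) r = magneticInner q (magneticBracket br p r)) :
    adT = magneticAdTranspose br := by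
  funext p q
  exact ext_magneticInner_right fun r => by rw [hadT, magneticInner_magneticAdTranspose hbr]

end MagneticExtension

theorem magnetic_extension_geodesic_equation_general
    {G : Type*} [NormedAddCommGroup G] [InnerProductSpace ℝ G] [CompleteSpace G]
    (brG : G →ₗ[ℝ] G →L[ℝ] G)
    (hGalt : ∀ X : G, brG X X = 0)
    (A : G ≃ₗ[ℝ] (G →L[ℝ] ℝ))
    (hA : ∀ X Y : G, A X Y = ⟪X, Y⟫)
    (ipStar : (G →L[ℝ] ℝ) → (G →L[ℝ] ℝ) → ℝ)
    (hip : ∀ a₁ a₂ : G →L[ℝ] ℝ, ipStar a₁ a₂ = ⟪A.symm a₁, A.symm a₂⟫)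
    (coad : G → (G →L[ℝ] ℝ) → (G →L[ℝ] ℝ))
    (hcoad : ∀ (X : G) (a : G →L[ℝ] ℝ) (Z : G), coad X a Z = - a (brG X Z))
    (adTP : G × (G →L[ℝ] ℝ) → G × (G →L[ℝ] ℝ) → G × (G →L[ℝ] ℝ))
    (hadTP : ∀ p q r : G × (G →L[ℝ] ℝ),
      ⟪(adTP p q).1, r.1⟫ + ipStar (adTP p q).2 r.2 =
        ⟪q.1, brG p.1 r.1⟫ + ipStar q.2 (coad p.1 r.2 - coad r.1 p.2))
    (u v : ℝ → G) (hu : Differentiable ℝ u) (hv : Differentiable ℝ v) :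
    (∀ t : ℝ, deriv (fun s => (u s, A (v s))) t = - adTP (u t, A (v t)) (u t, A (v t))) ↔
      ((∀ t : ℝ, deriv u t = - (brG (u t)).adjoint (u t) + (brG (v t)).adjoint (v t)) ∧
        (∀ t : ℝ, deriv v t = brG (u t) (v t))) := by
  obtain rfl : A = riesz.toLinearEquiv := eq_riesz_of_apply_eq_inner hA
  obtain rfl : coad = coadjoint brG :=
    funext₂ fun X a => ContinuousLinearMap.ext fun Z => hcoad X a Z
  obtain rfl : adTP = magneticAdTranspose brG :=
    eq_magneticAdTranspose hGalt fun p q r => by simpa only [hip] using! hadTP p q r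
  have hderiv (t : ℝ) : deriv (fun s => (u s, riesz (v s))) t = (deriv u t, riesz (deriv v t)) :=
    deriv_prodMk_clm_apply riesz.toContinuousLinearEquiv.toContinuousLinearMap (hu t) (hv t)
  rw [← forall_and]
  refine forall_congr' fun t => ?_
  simp only [LinearIsometryEquiv.coe_toLinearEquiv, hderiv, magneticAdTranspose,
    LinearIsometryEquiv.symm_apply_apply, Prod.neg_mk, neg_neg, neg_sub, neg_add_eq_sub,
    Prod.mk.injEq, riesz.injective.eq_iff]

/-- Geodesic equation on the magnetic extension `𝔤 ⋉ 𝔤*` (Proposition 5):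
for the right logarithmic derivative `(u, A(v))`,
`u_t = −ad(u)ᵀu + ad(v)ᵀv`, `v_t = [u,v]`. -/
theorem magnetic_extension_geodesic_equation
    {G : Type*} [NormedAddCommGroup G] [InnerProductSpace ℝ G] [FiniteDimensional ℝ G]
    (brG : G →ₗ[ℝ] G →ₗ[ℝ] G)
    (hGalt : ∀ X : G, brG X X = 0)
    (hGjac : ∀ X Y Z : G, brG X (brG Y Z) + brG Y (brG Z X) + brG Z (brG X Y) = 0)
    (A : G ≃ₗ[ℝ] (G →L[ℝ] ℝ))
    (hA : ∀ X Y : G, A X Y = ⟪X, Y⟫)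
    (ipStar : (G →L[ℝ] ℝ) → (G →L[ℝ] ℝ) → ℝ)
    (hip : ∀ a₁ a₂ : G →L[ℝ] ℝ, ipStar a₁ a₂ = ⟪A.symm a₁, A.symm a₂⟫)
    (coad : G → (G →L[ℝ] ℝ) → (G →L[ℝ] ℝ))
    (hcoad : ∀ (X : G) (a : G →L[ℝ] ℝ) (Z : G), coad X a Z = - a (brG X Z))
    (adTP : G × (G →L[ℝ] ℝ) → G × (G →L[ℝ] ℝ) → G × (G →L[ℝ] ℝ))
    (hadTP : ∀ p q r : G × (G →L[ℝ] ℝ),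
      ⟪(adTP p q).1, r.1⟫ + ipStar (adTP p q).2 r.2 =
        ⟪q.1, brG p.1 r.1⟫ + ipStar q.2 (coad p.1 r.2 - coad r.1 p.2))
    (u v : ℝ → G) (hu : Differentiable ℝ u) (hv : Differentiable ℝ v) :
    (∀ t : ℝ, deriv (fun s => (u s, A (v s))) t = - adTP (u t, A (v t)) (u t, A (v t))) ↔
      ((∀ t : ℝ, deriv u t =
          - LinearMap.adjoint (brG (u t)) (u t) + LinearMap.adjoint (brG (v t)) (v t)) ∧
        (∀ t : ℝ, deriv v t = brG (u t) (v t))) := by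
  have : CompleteSpace G := FiniteDimensional.complete ℝ G
  exact magnetic_extension_geodesic_equation_general
    (LinearMap.toContinuousLinearMap.toLinearMap ∘ₗ brG) hGalt A hA ipStar hip coad hcoad adTP hadTP
    u v hu hv
end
end
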